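/- arXiv:2312.10252 — 18 statements merged into one kernel-verified Lean document; each statement's English description precedes it below -/
import Mathlib

section
/- Let α < β be real numbers and let ψ, φ : [α,β] → ℝ be integrable functions with φ(υ) > 0 for all υ ∈ [α,β]. If the ratio υ ↦ ψ(υ)/φ(υ) is increasing on [α,β], then the function s ↦ (∫_α^s ψ(υ) dυ) / (∫_α^s φ(υ) dυ) is increasing on (α,β], i.e. for all α < s₁ ≤ s₂ ≤ β one has (∫_α^{s₁} ψ)/(∫_α^{s₁} φ) ≤ (∫_α^{s₂} ψ)/(∫_α^{s₂} φ). -/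
open MeasureTheory Set intervalIntegral

theorem quotient_integral_variable_upper_limit_monotone
    (α β : ℝ) (hαβ : α < β) (ψ φ : ℝ → ℝ)
    (hψ : IntervalIntegrable ψ volume α β)
    (hφ : IntervalIntegrable φ volume α β)
    (hφpos : ∀ υ ∈ Icc α β, 0 < φ υ)
    (hratio : MonotoneOn (fun υ => ψ υ / φ υ) (Icc α β)) :
    ∀ s₁ s₂ : ℝ, α < s₁ → s₁ ≤ s₂ → s₂ ≤ β →
      (∫ υ in α..s₁, ψ υ) / (∫ υ in α..s₁, φ υ) ≤
        (∫ υ in α..s₂, ψ υ) / (∫ υ in α..s₂, φ υ) := by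
  intro s₁ s₂ h1 h12 h2
  have i1 : uIcc α s₁ ⊆ uIcc α β := by
    rw [uIcc_of_le h1.le, uIcc_of_le hαβ.le]
    exact Icc_subset_Icc le_rfl (h12.trans h2)
  have i2 : uIcc s₁ s₂ ⊆ uIcc α β := by
    rw [uIcc_of_le h12, uIcc_of_le hαβ.le]
    exact Icc_subset_Icc h1.le h2
  have hψ1 := hψ.mono_set i1
  have hψ2 := hψ.mono_set i2
  have hφ1 := hφ.mono_set i1
  have hφ2 := hφ.mono_set i2
  have hs : s₁ ∈ Icc α β := ⟨h1.le, h12.trans h2⟩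
  have hA : 0 < ∫ υ in α..s₁, φ υ :=
    intervalIntegral_pos_of_pos_on hφ1
      (fun x hx => hφpos x ⟨hx.1.le, hx.2.le.trans hs.2⟩) h1
  have hB : 0 ≤ ∫ υ in s₁..s₂, φ υ :=
    integral_nonneg h12 (fun x hx => (hφpos x ⟨h1.le.trans hx.1, hx.2.trans h2⟩).le)
  obtain ⟨c, hc⟩ : ∃ c, c = ψ s₁ / φ s₁ := ⟨_, rfl⟩
  have hP : (∫ υ in α..s₁, ψ υ) ≤ c * ∫ υ in α..s₁, φ υ := by
    rw [← intervalIntegral.integral_const_mul]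
    refine integral_mono_on h1.le hψ1 (hφ1.const_mul c) (fun x hx => ?_)
    have hx' : x ∈ Icc α β := ⟨hx.1, hx.2.trans hs.2⟩
    have h := hratio hx' hs hx.2
    simp only [← hc] at h
    exact (div_le_iff₀ (hφpos x hx')).1 h
  have hQ : (c * ∫ υ in s₁..s₂, φ υ) ≤ ∫ υ in s₁..s₂, ψ υ := by
    rw [← intervalIntegral.integral_const_mul]
    refine integral_mono_on h12 (hφ2.const_mul c) hψ2 (fun x hx => ?_)
    have hx' : x ∈ Icc α β := ⟨h1.le.trans hx.1, hx.2.trans h2⟩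
    have h := hratio hs hx' hx.1
    simp only [← hc] at h
    exact (le_div_iff₀ (hφpos x hx')).1 h
  rw [← integral_add_adjacent_intervals hψ1 hψ2, ← integral_add_adjacent_intervals hφ1 hφ2,
    div_le_div_iff₀ hA (by linarith)]
  have e1 := mul_le_mul_of_nonneg_right hP hB
  have e2 := mul_le_mul_of_nonneg_right hQ hA.le
  linarith
end

section
/- Let a ∈ ℕ and let ψ, φ : ℕ → ℝ be sequences with φ(k) > 0 for all k. If the ratio k ↦ ψ(k)/φ(k) is increasing on ℕ, then the function n ↦ (∑_{k=a}^{n-1} ψ(k)) / (∑_{k=a}^{n-1} φ(k)) is increasing for integers n ≥ a+1, i.e. for all a+1 ≤ n₁ ≤ n₂ one has (∑_{k=a}^{n₁-1} ψ(k))/(∑_{k=a}^{n₁-1} φ(k)) ≤ (∑_{k=a}^{n₂-1} ψ(k))/(∑_{k=a}^{n₂-1} φ(k)). -/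
theorem quotient_sum_variable_upper_limit_monotone
    (a : ℕ) (ψ φ : ℕ → ℝ) (hφpos : ∀ k, 0 < φ k)
    (hratio : Monotone fun k => ψ k / φ k) :
    ∀ n₁ n₂ : ℕ, a + 1 ≤ n₁ → n₁ ≤ n₂ →
      (∑ k ∈ Finset.Ico a n₁, ψ k) / (∑ k ∈ Finset.Ico a n₁, φ k) ≤
        (∑ k ∈ Finset.Ico a n₂, ψ k) / (∑ k ∈ Finset.Ico a n₂, φ k) := by
  intro n₁ n₂ h1 h2
  induction n₂, h2 using Nat.le_induction with
  | base => exact le_refl _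
  | succ n hn ih =>
    refine ih.trans ?_
    have hpos : 0 < ∑ k ∈ Finset.Ico a n, φ k :=
      Finset.sum_pos (fun k _ => hφpos k) (Finset.nonempty_Ico.2 (by omega))
    have key : (∑ k ∈ Finset.Ico a n, ψ k) * φ n ≤ ψ n * ∑ k ∈ Finset.Ico a n, φ k := by
      rw [Finset.sum_mul, Finset.mul_sum]
      refine Finset.sum_le_sum fun k hk => ?_
      have h : ψ k / φ k ≤ ψ n / φ n := hratio (Finset.mem_Ico.1 hk).2.le
      exact (div_le_div_iff₀ (hφpos k) (hφpos n)).1 h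
    rw [Finset.sum_Ico_succ_top (by omega), Finset.sum_Ico_succ_top (by omega),
      div_le_div_iff₀ hpos (add_pos hpos (hφpos n))]
    linarith
end

section
/- Let α < β be real numbers, let ψ, φ : [α,β] → ℝ be continuous functions with φ(υ) > 0 for all υ ∈ [α,β], such that υ ↦ ψ(υ)/φ(υ) is increasing on [α,β] and ψ(α)/φ(α) ≥ 1. Let T : [α,β] → [0,∞) be differentiable and decreasing. Then the function s ↦ (T(s) + ∫_α^s ψ(υ) dυ) / (T(s) + ∫_α^s φ(υ) dυ) is increasing on (α,β] (and on [α,β] whenever the denominator is positive at α). -/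
open MeasureTheory Set intervalIntegral

theorem quotient_T_plus_integral_monotone
    (α β : ℝ) (hαβ : α < β) (ψ φ T : ℝ → ℝ)
    (hψc : ContinuousOn ψ (Icc α β))
    (hφc : ContinuousOn φ (Icc α β))
    (hφpos : ∀ υ ∈ Icc α β, 0 < φ υ)
    (hratio : MonotoneOn (fun υ => ψ υ / φ υ) (Icc α β))
    (hinit : 1 ≤ ψ α / φ α)
    (hTnonneg : ∀ s ∈ Icc α β, 0 ≤ T s)
    (hTdiff : DifferentiableOn ℝ T (Icc α β))
    (hTdec : AntitoneOn T (Icc α β)) :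
    ∀ s₁ s₂ : ℝ, α ≤ s₁ → s₁ ≤ s₂ → s₂ ≤ β →
      (α < s₁ ∨ 0 < T s₁ + ∫ υ in α..s₁, φ υ) →
      (T s₁ + ∫ υ in α..s₁, ψ υ) / (T s₁ + ∫ υ in α..s₁, φ υ) ≤
        (T s₂ + ∫ υ in α..s₂, ψ υ) / (T s₂ + ∫ υ in α..s₂, φ υ) := by
  intro s₁ s₂ h1 h12 h2 hpos
  rcases eq_or_lt_of_le h12 with rfl | hlt
  · exact le_rfl
  have hint : ∀ f : ℝ → ℝ, ContinuousOn f (Icc α β) → ∀ a b : ℝ, α ≤ a → a ≤ b → b ≤ β →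
      IntervalIntegrable f volume a b := by
    intro f hf a b ha hab hb
    apply ContinuousOn.intervalIntegrable
    rw [uIcc_of_le hab]
    exact hf.mono (Icc_subset_Icc ha hb)
  have m1 : s₁ ∈ Icc α β := ⟨h1, h12.trans h2⟩
  have m2 : s₂ ∈ Icc α β := ⟨h1.trans h12, h2⟩
  have iψ1 := hint ψ hψc α s₁ le_rfl h1 m1.2
  have iφ1 := hint φ hφc α s₁ le_rfl h1 m1.2
  have iψ2 := hint ψ hψc s₁ s₂ h1 h12 h2
  have iφ2 := hint φ hφc s₁ s₂ h1 h12 h2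
  rw [← integral_add_adjacent_intervals iψ1 iψ2, ← integral_add_adjacent_intervals iφ1 iφ2]
  have hTT := hTdec m1 m2 h12
  have hT1 := hTnonneg _ m1
  have hT2 := hTnonneg _ m2
  have mα : α ∈ Icc α β := ⟨le_rfl, hαβ.le⟩
  obtain ⟨k, hk⟩ : ∃ k, k = ψ s₁ / φ s₁ := ⟨_, rfl⟩
  have hk1 : 1 ≤ k := by
    rw [hk]; exact hinit.trans (hratio mα m1 h1)
  have hA : (∫ υ in α..s₁, ψ υ) ≤ k * ∫ υ in α..s₁, φ υ := by
    rw [← intervalIntegral.integral_const_mul]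
    apply integral_mono_on h1 iψ1 (iφ1.const_mul k)
    intro x hx
    have mx : x ∈ Icc α β := ⟨hx.1, hx.2.trans m1.2⟩
    have h : ψ x / φ x ≤ ψ s₁ / φ s₁ := hratio mx m1 hx.2
    rw [← hk] at h
    exact (div_le_iff₀ (hφpos x mx)).1 h
  have hAB : (∫ υ in α..s₁, φ υ) ≤ ∫ υ in α..s₁, ψ υ := by
    apply integral_mono_on h1 iφ1 iψ1
    intro x hx
    have mx : x ∈ Icc α β := ⟨hx.1, hx.2.trans m1.2⟩
    have h : 1 ≤ ψ x / φ x := hinit.trans (hratio mα mx hx.1)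
    exact (one_le_div (hφpos x mx)).1 h
  have hC : k * (∫ υ in s₁..s₂, φ υ) ≤ ∫ υ in s₁..s₂, ψ υ := by
    rw [← intervalIntegral.integral_const_mul]
    apply integral_mono_on h12 (iφ2.const_mul k) iψ2
    intro x hx
    have mx : x ∈ Icc α β := ⟨h1.trans hx.1, hx.2.trans h2⟩
    have h : ψ s₁ / φ s₁ ≤ ψ x / φ x := hratio m1 mx hx.1
    rw [← hk] at h
    exact (le_div_iff₀ (hφpos x mx)).1 h
  have hB : 0 ≤ ∫ υ in α..s₁, φ υ :=
    integral_nonneg h1 fun x hx => (hφpos x ⟨hx.1, hx.2.trans m1.2⟩).le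
  have hD : 0 < ∫ υ in s₁..s₂, φ υ :=
    intervalIntegral_pos_of_pos_on iφ2
      (fun x hx => hφpos x ⟨h1.trans hx.1.le, hx.2.le.trans h2⟩) hlt
  have hd1 : 0 < T s₁ + ∫ υ in α..s₁, φ υ := by
    rcases hpos with h | h
    · have : 0 < ∫ υ in α..s₁, φ υ :=
        intervalIntegral_pos_of_pos_on iφ1
          (fun x hx => hφpos x ⟨hx.1.le, hx.2.le.trans m1.2⟩) h
      linarith
    · exact h
  generalize (∫ υ in α..s₁, ψ υ) = A at *
  generalize (∫ υ in α..s₁, φ υ) = B at *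
  generalize (∫ υ in s₁..s₂, ψ υ) = C at *
  generalize (∫ υ in s₁..s₂, φ υ) = D at *
  rw [div_le_div_iff₀ hd1 (by linarith)]
  have e1 : 0 ≤ (A - B) * (T s₁ - T s₂) := mul_nonneg (by linarith) (by linarith)
  have e2 : 0 ≤ (k - 1) * D := mul_nonneg (by linarith) hD.le
  have e3 : 0 ≤ T s₁ * (C - D) := mul_nonneg hT1 (by linarith)
  have e4 : 0 ≤ (C - k * D) * B := mul_nonneg (by linarith) hB
  have e5 : 0 ≤ (k * B - A) * D := mul_nonneg (by linarith) hD.le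
  linarith
end

section
/- Let a ∈ ℕ and let ψ, φ : ℕ → ℝ be sequences with φ(k) > 0 for all k, such that k ↦ ψ(k)/φ(k) is increasing and ψ(a)/φ(a) ≥ 1. Let T : ℕ → [0,∞) be a decreasing sequence. Then the function n ↦ (T(n) + ∑_{k=a}^{n-1} ψ(k)) / (T(n) + ∑_{k=a}^{n-1} φ(k)) is increasing for integers n ≥ a+1 (and for all n ≥ a at which the denominator is positive). -/
theorem quotient_T_plus_sum_monotone
    (a : ℕ) (ψ φ T : ℕ → ℝ) (hφpos : ∀ k, 0 < φ k)
    (hratio : Monotone fun k => ψ k / φ k)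
    (hinit : 1 ≤ ψ a / φ a)
    (hTnonneg : ∀ n, 0 ≤ T n)
    (hTdec : Antitone T) :
    ∀ n₁ n₂ : ℕ, a ≤ n₁ → n₁ ≤ n₂ →
      (a + 1 ≤ n₁ ∨ 0 < T n₁ + ∑ k ∈ Finset.Ico a n₁, φ k) →
      (T n₁ + ∑ k ∈ Finset.Ico a n₁, ψ k) / (T n₁ + ∑ k ∈ Finset.Ico a n₁, φ k) ≤
        (T n₂ + ∑ k ∈ Finset.Ico a n₂, ψ k) / (T n₂ + ∑ k ∈ Finset.Ico a n₂, φ k) := by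
  intro n₁ n₂ h1 h12 hpos
  have hsplitψ := Finset.sum_Ico_consecutive ψ h1 h12
  have hsplitφ := Finset.sum_Ico_consecutive φ h1 h12
  have hr : 1 ≤ ψ n₁ / φ n₁ := hinit.trans (hratio h1)
  have hF1 : 0 ≤ ∑ k ∈ Finset.Ico a n₁, φ k := Finset.sum_nonneg fun k _ => (hφpos k).le
  have hf : 0 ≤ ∑ k ∈ Finset.Ico n₁ n₂, φ k := Finset.sum_nonneg fun k _ => (hφpos k).le
  have hFP : ∑ k ∈ Finset.Ico a n₁, φ k ≤ ∑ k ∈ Finset.Ico a n₁, ψ k := by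
    refine Finset.sum_le_sum fun k hk => ?_
    have h : 1 ≤ ψ k / φ k := hinit.trans (hratio (Finset.mem_Ico.1 hk).1)
    rwa [one_le_div (hφpos k)] at h
  have hPr : ∑ k ∈ Finset.Ico a n₁, ψ k ≤ (ψ n₁ / φ n₁) * ∑ k ∈ Finset.Ico a n₁, φ k := by
    rw [Finset.mul_sum]
    refine Finset.sum_le_sum fun k hk => ?_
    have h : ψ k / φ k ≤ ψ n₁ / φ n₁ := hratio (Finset.mem_Ico.1 hk).2.le
    rwa [div_le_iff₀ (hφpos k)] at h
  have hpr : (ψ n₁ / φ n₁) * ∑ k ∈ Finset.Ico n₁ n₂, φ k ≤ ∑ k ∈ Finset.Ico n₁ n₂, ψ k := by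
    rw [Finset.mul_sum]
    refine Finset.sum_le_sum fun k hk => ?_
    have h : ψ n₁ / φ n₁ ≤ ψ k / φ k := hratio (Finset.mem_Ico.1 hk).1
    rwa [le_div_iff₀ (hφpos k)] at h
  have key : ∀ n, a < n → 0 < T n + ∑ k ∈ Finset.Ico a n, φ k := fun n hn =>
    add_pos_of_nonneg_of_pos (hTnonneg n)
      (Finset.sum_pos (fun k _ => hφpos k) (Finset.nonempty_Ico.2 hn))
  have hD1 : 0 < T n₁ + ∑ k ∈ Finset.Ico a n₁, φ k := hpos.elim (fun h => key n₁ h) id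
  rcases h12.eq_or_lt with rfl | hlt
  · exact le_rfl
  have hD2 := key n₂ (h1.trans_lt hlt)
  rw [div_le_div_iff₀ hD1 hD2, ← hsplitψ, ← hsplitφ]
  have hT1 := hTnonneg n₁
  have hT : T n₂ ≤ T n₁ := hTdec h12
  generalize ψ n₁ / φ n₁ = r at *
  generalize ∑ k ∈ Finset.Ico a n₁, ψ k = P at *
  generalize ∑ k ∈ Finset.Ico a n₁, φ k = F at *
  generalize ∑ k ∈ Finset.Ico n₁ n₂, ψ k = p at *
  generalize ∑ k ∈ Finset.Ico n₁ n₂, φ k = f at *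
  have e0 : f ≤ p := by nlinarith
  have e1 : 0 ≤ T n₁ * (p - f) := mul_nonneg hT1 (by linarith)
  have e2 : 0 ≤ (T n₁ - T n₂) * (P - F) := mul_nonneg (by linarith) (by linarith)
  have e3 := mul_le_mul_of_nonneg_right hPr hf
  have e4 := mul_le_mul_of_nonneg_right hpr hF1
  nlinarith
end

section
/- Let a ∈ ℕ and let ψ, φ : ℕ → ℝ be sequences with ψ(k) > 0 and φ(k) > 0 for all k, such that k ↦ ψ(k)/φ(k) is increasing. Let T₁, T₂ : ℕ → (0,∞) be sequences, and suppose that for every integer n ≥ a+1: ψ(n)/(∑_{k=a}^{n-1} ψ(k)) ≥ (T₁(n+1) − T₁(n))/T₁(n) ≥ (T₂(n+1) − T₂(n))/T₂(n) ≥ φ(n)/(∑_{k=a}^{n-1} φ(k)). Then the function n ↦ (T₁(n) + ∑_{k=a}^{n-1} ψ(k)) / (T₂(n) + ∑_{k=a}^{n-1} φ(k)) is increasing for integers n ≥ a+1. -/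
theorem quotient_T1_plus_sum_T2_plus_sum_monotone
    (a : ℕ) (ψ φ T₁ T₂ : ℕ → ℝ)
    (hψpos : ∀ k, 0 < ψ k) (hφpos : ∀ k, 0 < φ k)
    (hratio : Monotone fun k => ψ k / φ k)
    (hT₁pos : ∀ n, 0 < T₁ n) (hT₂pos : ∀ n, 0 < T₂ n)
    (hchain : ∀ n : ℕ, a + 1 ≤ n →
      φ n / (∑ k ∈ Finset.Ico a n, φ k) ≤ (T₂ (n + 1) - T₂ n) / T₂ n ∧
      (T₂ (n + 1) - T₂ n) / T₂ n ≤ (T₁ (n + 1) - T₁ n) / T₁ n ∧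
      (T₁ (n + 1) - T₁ n) / T₁ n ≤ ψ n / (∑ k ∈ Finset.Ico a n, ψ k)) :
    ∀ n₁ n₂ : ℕ, a + 1 ≤ n₁ → n₁ ≤ n₂ →
      (T₁ n₁ + ∑ k ∈ Finset.Ico a n₁, ψ k) / (T₂ n₁ + ∑ k ∈ Finset.Ico a n₁, φ k) ≤
        (T₁ n₂ + ∑ k ∈ Finset.Ico a n₂, ψ k) / (T₂ n₂ + ∑ k ∈ Finset.Ico a n₂, φ k) := by
  intro n₁ n₂ h1 h12
  induction n₂, h12 using Nat.le_induction with
  | base => exact le_rfl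
  | succ n hn ih =>
    refine ih.trans ?_
    have han : a + 1 ≤ n := h1.trans hn
    obtain ⟨hxy, hyz, hzw⟩ := hchain n han
    have hne : (Finset.Ico a n).Nonempty := Finset.nonempty_Ico.mpr (by omega)
    have hS : 0 < ∑ k ∈ Finset.Ico a n, ψ k := Finset.sum_pos (fun k _ => hψpos k) hne
    have hF : 0 < ∑ k ∈ Finset.Ico a n, φ k := Finset.sum_pos (fun k _ => hφpos k) hne
    rw [Finset.sum_Ico_succ_top (by omega : a ≤ n), Finset.sum_Ico_succ_top (by omega : a ≤ n)]
    generalize (∑ k ∈ Finset.Ico a n, ψ k) = S at *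
    generalize (∑ k ∈ Finset.Ico a n, φ k) = F at *
    have hp := hT₁pos n
    have hq := hT₂pos n
    have hq' := hT₂pos (n + 1)
    have hf := hφpos n
    rw [div_le_div_iff₀ (by positivity) (by positivity)]
    obtain ⟨x, hx⟩ : ∃ x, x = φ n / F := ⟨_, rfl⟩
    obtain ⟨y, hy⟩ : ∃ y, y = (T₂ (n + 1) - T₂ n) / T₂ n := ⟨_, rfl⟩
    obtain ⟨z, hz⟩ : ∃ z, z = (T₁ (n + 1) - T₁ n) / T₁ n := ⟨_, rfl⟩
    obtain ⟨w, hw⟩ : ∃ w, w = ψ n / S := ⟨_, rfl⟩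
    rw [← hx, ← hy] at hxy
    rw [← hy, ← hz] at hyz
    rw [← hz, ← hw] at hzw
    rw [eq_div_iff (by positivity)] at hx hy hz hw
    have e1 : T₁ (n + 1) = T₁ n + z * T₁ n := by linarith
    have e2 : T₂ (n + 1) = T₂ n + y * T₂ n := by linarith
    rw [e1, e2, ← hx, ← hw]
    have k1 := mul_nonneg (mul_pos hp hq).le (sub_nonneg.mpr hyz)
    have k2 := mul_nonneg (mul_pos hp hF).le (sub_nonneg.mpr (hxy.trans hyz))
    have k3 := mul_nonneg (mul_pos hS hq).le (sub_nonneg.mpr (hyz.trans hzw))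
    have k4 := mul_nonneg (mul_pos hS hF).le (sub_nonneg.mpr (hxy.trans (hyz.trans hzw)))
    linarith
end

section
/- Let a ∈ ℕ, let λ ∈ [0,1], and let ψ, φ : ℕ → ℝ be sequences with φ(k) > 0 for all k, such that φ is increasing and k ↦ ψ(k)/φ(k) is increasing. For n ≥ a+1 define F(n) = λ·∑_{k=a}^{n-1} ψ(k) + (1−λ)·∑_{k=a+1}^{n} ψ(k) and G(n) = λ·∑_{k=a}^{n-1} φ(k) + (1−λ)·∑_{k=a+1}^{n} φ(k). Then the function n ↦ F(n)/G(n) is increasing for integers n ≥ a+1. -/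
theorem quotient_diamond_alpha_sum_monotone
    (a : ℕ) (lam : ℝ) (hlam : lam ∈ Set.Icc (0 : ℝ) 1)
    (ψ φ : ℕ → ℝ) (hφpos : ∀ k, 0 < φ k)
    (hφmono : Monotone φ)
    (hratio : Monotone fun k => ψ k / φ k) :
    ∀ n₁ n₂ : ℕ, a + 1 ≤ n₁ → n₁ ≤ n₂ →
      (lam * ∑ k ∈ Finset.Ico a n₁, ψ k + (1 - lam) * ∑ k ∈ Finset.Ico (a + 1) (n₁ + 1), ψ k) /
        (lam * ∑ k ∈ Finset.Ico a n₁, φ k + (1 - lam) * ∑ k ∈ Finset.Ico (a + 1) (n₁ + 1), φ k) ≤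
      (lam * ∑ k ∈ Finset.Ico a n₂, ψ k + (1 - lam) * ∑ k ∈ Finset.Ico (a + 1) (n₂ + 1), ψ k) /
        (lam * ∑ k ∈ Finset.Ico a n₂, φ k + (1 - lam) * ∑ k ∈ Finset.Ico (a + 1) (n₂ + 1), φ k) := by
  obtain ⟨h0, h1⟩ := hlam
  have h1' : 0 ≤ 1 - lam := by linarith
  have key : ∀ (f : ℕ → ℝ) (n : ℕ),
      lam * ∑ k ∈ Finset.Ico a n, f k + (1 - lam) * ∑ k ∈ Finset.Ico (a + 1) (n + 1), f k
        = ∑ k ∈ Finset.Ico a n, (lam * f k + (1 - lam) * f (k + 1)) := by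
    intro f n
    rw [← Finset.sum_Ico_add' f a n 1, Finset.mul_sum, Finset.mul_sum, Finset.sum_add_distrib]
  simp only [key]
  have qpos : ∀ k, 0 < lam * φ k + (1 - lam) * φ (k + 1) := by
    intro k
    have e1 := hφpos k
    have e2 := hφmono (Nat.le_succ k)
    simp only [Nat.succ_eq_add_one] at e2
    nlinarith [mul_le_mul_of_nonneg_left e2 h1']
  have hψ : ∀ k, ψ k = ψ k / φ k * φ k := fun k => (div_mul_cancel₀ _ (hφpos k).ne').symm
  have up : ∀ k n, k ≤ n → ψ k ≤ ψ n / φ n * φ k := by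
    intro k n hkn
    have := mul_le_mul_of_nonneg_right (hratio hkn) (hφpos k).le
    simp only at this
    rwa [← hψ k] at this
  have lo : ∀ k n, n ≤ k → ψ n / φ n * φ k ≤ ψ k := by
    intro k n hkn
    have := mul_le_mul_of_nonneg_right (hratio hkn) (hφpos k).le
    simp only at this
    rwa [← hψ k] at this
  intro n₁ n₂ hn h
  induction n₂, h using Nat.le_induction with
  | base => exact le_rfl
  | succ n hle ih =>
    refine ih.trans ?_
    have han : a ≤ n := by omega
    rw [Finset.sum_Ico_succ_top han, Finset.sum_Ico_succ_top han]
    have hG : 0 < ∑ k ∈ Finset.Ico a n, (lam * φ k + (1 - lam) * φ (k + 1)) :=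
      Finset.sum_pos (fun k _ => qpos k) ⟨a, by simp; omega⟩
    have hF : ∑ k ∈ Finset.Ico a n, (lam * ψ k + (1 - lam) * ψ (k + 1))
        ≤ ψ n / φ n * ∑ k ∈ Finset.Ico a n, (lam * φ k + (1 - lam) * φ (k + 1)) := by
      rw [Finset.mul_sum]
      refine Finset.sum_le_sum fun k hk => ?_
      rw [Finset.mem_Ico] at hk
      have e1 := mul_le_mul_of_nonneg_left (up k n hk.2.le) h0
      have e2 := mul_le_mul_of_nonneg_left (up (k + 1) n hk.2) h1'
      linarith
    have hp : ψ n / φ n * (lam * φ n + (1 - lam) * φ (n + 1))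
        ≤ lam * ψ n + (1 - lam) * ψ (n + 1) := by
      have e1 := mul_le_mul_of_nonneg_left (lo n n le_rfl) h0
      have e2 := mul_le_mul_of_nonneg_left (lo (n + 1) n (Nat.le_succ n)) h1'
      linarith
    have hq := qpos n
    rw [div_le_div_iff₀ hG (by linarith)]
    have e1 := mul_le_mul_of_nonneg_right hF hq.le
    have e2 := mul_le_mul_of_nonneg_right hp hG.le
    linarith
end

section
/- Let r > 0 and let (ψ_n)_{n∈ℕ} and (φ_n)_{n∈ℕ} be real sequences with φ_n > 0 for all n, such that n ↦ ψ_n/φ_n is increasing. Suppose the power series Ψ(s) = ∑_{n=0}^∞ ψ_n s^n and Φ(s) = ∑_{n=0}^∞ φ_n s^n converge for every s ∈ (0,r). Then the function s ↦ Ψ(s)/Φ(s) is increasing on (0,r). -/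
theorem partial_sums_le (ψ φ : ℕ → ℝ) (hφpos : ∀ n, 0 < φ n)
    (hratio : Monotone fun n => ψ n / φ n) (x y : ℝ) (hx : 0 < x) (hxy : x ≤ y) (N : ℕ) :
    (∑ n ∈ Finset.range N, ψ n * x ^ n) * (∑ n ∈ Finset.range N, φ n * y ^ n) ≤
    (∑ n ∈ Finset.range N, ψ n * y ^ n) * (∑ n ∈ Finset.range N, φ n * x ^ n) := by
  induction N with
  | zero => simp
  | succ N ih =>
    have key : 0 ≤ ∑ k ∈ Finset.range N,
        (ψ N * φ k - ψ k * φ N) * (y ^ N * x ^ k - x ^ N * y ^ k) := by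
      apply Finset.sum_nonneg
      intro k hk
      have hkN : k ≤ N := (Finset.mem_range.mp hk).le
      apply mul_nonneg
      · have h : ψ k / φ k ≤ ψ N / φ N := hratio hkN
        rw [div_le_div_iff₀ (hφpos k) (hφpos N)] at h
        linarith
      · obtain ⟨d, rfl⟩ := Nat.exists_eq_add_of_le hkN
        have hd : x ^ d ≤ y ^ d := pow_le_pow_left₀ hx.le hxy d
        have hy : 0 < y := hx.trans_le hxy
        have h : 0 ≤ (x ^ k * y ^ k) * (y ^ d - x ^ d) :=
          mul_nonneg (by positivity) (by linarith)
        rw [pow_add, pow_add]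
        linarith
    have e : ∑ k ∈ Finset.range N,
        (ψ N * φ k - ψ k * φ N) * (y ^ N * x ^ k - x ^ N * y ^ k) =
        ψ N * y ^ N * (∑ n ∈ Finset.range N, φ n * x ^ n)
        - ψ N * x ^ N * (∑ n ∈ Finset.range N, φ n * y ^ n)
        - φ N * y ^ N * (∑ n ∈ Finset.range N, ψ n * x ^ n)
        + φ N * x ^ N * (∑ n ∈ Finset.range N, ψ n * y ^ n) := by
      simp only [Finset.mul_sum, ← Finset.sum_sub_distrib, ← Finset.sum_add_distrib]
      apply Finset.sum_congr rfl
      intro k _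
      ring
    rw [e] at key
    simp only [Finset.sum_range_succ]
    nlinarith

theorem quotient_power_series_monotone
    (r : ℝ) (hr : 0 < r) (ψ φ : ℕ → ℝ) (hφpos : ∀ n, 0 < φ n)
    (hratio : Monotone fun n => ψ n / φ n)
    (hψsum : ∀ s ∈ Set.Ioo (0 : ℝ) r, Summable fun n => ψ n * s ^ n)
    (hφsum : ∀ s ∈ Set.Ioo (0 : ℝ) r, Summable fun n => φ n * s ^ n) :
    MonotoneOn (fun s => (∑' n : ℕ, ψ n * s ^ n) / (∑' n : ℕ, φ n * s ^ n))
      (Set.Ioo (0 : ℝ) r) := by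
  have hpos : ∀ s ∈ Set.Ioo (0 : ℝ) r, 0 < ∑' n : ℕ, φ n * s ^ n := fun s hs =>
    (hφsum s hs).tsum_pos (fun n => (mul_pos (hφpos n) (pow_pos hs.1 n)).le) 0
      (mul_pos (hφpos 0) (pow_pos hs.1 0))
  intro x hx y hy hxy
  change _ / _ ≤ _ / _
  rw [div_le_div_iff₀ (hpos x hx) (hpos y hy)]
  exact le_of_tendsto_of_tendsto'
    ((hψsum x hx).hasSum.tendsto_sum_nat.mul (hφsum y hy).hasSum.tendsto_sum_nat)
    ((hψsum y hy).hasSum.tendsto_sum_nat.mul (hφsum x hx).hasSum.tendsto_sum_nat)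
    (partial_sums_le ψ φ hφpos hratio x y hx.1 hxy)
end

section
/- Let 0 < a < b, and let ψ, φ : [0,∞) → ℝ be measurable functions with φ(υ) > 0 for all υ ≥ 0, such that υ ↦ ψ(υ)/φ(υ) is increasing on [0,∞). Suppose that for every s ∈ (a,b) the functions υ ↦ ψ(υ)s^υ and υ ↦ φ(υ)s^υ are integrable on [0,∞). Then the function s ↦ (∫_0^∞ ψ(υ) s^υ dυ) / (∫_0^∞ φ(υ) s^υ dυ) is increasing on (a,b). -/
open MeasureTheory Set

lemma aux_rpow (s t u v : ℝ) (hs : 0 < s) (hst : s ≤ t) (huv : u ≤ v) :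
    t ^ u * s ^ v ≤ s ^ u * t ^ v := by
  have ht : 0 < t := hs.trans_le hst
  have e1 : s ^ v = s ^ u * s ^ (v - u) := by rw [← Real.rpow_add hs]; congr 1; ring
  have e2 : t ^ v = t ^ u * t ^ (v - u) := by rw [← Real.rpow_add ht]; congr 1; ring
  have h := Real.rpow_le_rpow hs.le hst (sub_nonneg.2 huv)
  have p : 0 ≤ s ^ u * t ^ u := by positivity
  rw [e1, e2]
  nlinarith [mul_le_mul_of_nonneg_left h p]

theorem quotient_integral_rpow_kernel_monotone
    (a b : ℝ) (ha : 0 < a) (hab : a < b) (ψ φ : ℝ → ℝ)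
    (hψm : Measurable ψ) (hφm : Measurable φ)
    (hφpos : ∀ υ : ℝ, 0 ≤ υ → 0 < φ υ)
    (hratio : MonotoneOn (fun υ => ψ υ / φ υ) (Ici (0 : ℝ)))
    (hψint : ∀ s ∈ Ioo a b, IntegrableOn (fun υ => ψ υ * s ^ υ) (Ici (0 : ℝ)) volume)
    (hφint : ∀ s ∈ Ioo a b, IntegrableOn (fun υ => φ υ * s ^ υ) (Ici (0 : ℝ)) volume) :
    MonotoneOn
      (fun s => (∫ υ in Ici (0 : ℝ), ψ υ * s ^ υ) / (∫ υ in Ici (0 : ℝ), φ υ * s ^ υ))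
      (Ioo a b) := by
  have hpos : ∀ s ∈ Ioo a b, 0 < ∫ υ in Ici (0 : ℝ), φ υ * s ^ υ := by
    intro s hs
    have hs0 : 0 < s := ha.trans hs.1
    have hp : ∀ υ ∈ Ici (0 : ℝ), 0 < φ υ * s ^ υ := fun υ hυ =>
      mul_pos (hφpos υ hυ) (Real.rpow_pos_of_pos hs0 υ)
    rw [setIntegral_pos_iff_support_of_nonneg_ae _ (hφint s hs)]
    · have : Function.support (fun υ => φ υ * s ^ υ) ∩ Ici (0 : ℝ) = Ici 0 :=
        inter_eq_right.2 fun υ hυ => (hp υ hυ).ne'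
      rw [this]; simp
    · exact (ae_restrict_mem measurableSet_Ici).mono fun υ hυ => (hp υ hυ).le
  intro s hs t ht hst
  have hs0 : 0 < s := ha.trans hs.1
  have key : ∀ u v : ℝ, 0 ≤ u → u ≤ v →
      0 ≤ (ψ v * φ u - ψ u * φ v) * (s ^ u * t ^ v - t ^ u * s ^ v) := by
    intro u v hu huv
    have h := hratio (mem_Ici.2 hu) (mem_Ici.2 (hu.trans huv)) huv
    simp only at h
    rw [div_le_div_iff₀ (hφpos u hu) (hφpos v (hu.trans huv))] at h
    exact mul_nonneg (sub_nonneg.2 h) (sub_nonneg.2 (aux_rpow s t u v hs0 hst huv))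
  simp only
  rw [div_le_div_iff₀ (hpos s hs) (hpos t ht)]
  set μ := (volume : Measure ℝ).restrict (Ici 0) with hμ
  have i1 := (hψint t ht).mul_prod (hφint s hs)
  have i2 := (hφint s hs).mul_prod (hψint t ht)
  have i3 := (hψint s hs).mul_prod (hφint t ht)
  have i4 := (hφint t ht).mul_prod (hψint s hs)
  have hn : 0 ≤ ∫ z : ℝ × ℝ, (((ψ z.1 * t ^ z.1) * (φ z.2 * s ^ z.2)
      + (φ z.1 * s ^ z.1) * (ψ z.2 * t ^ z.2))
      - ((ψ z.1 * s ^ z.1) * (φ z.2 * t ^ z.2)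
      + (φ z.1 * t ^ z.1) * (ψ z.2 * s ^ z.2))) ∂(μ.prod μ) := by
    apply integral_nonneg_of_ae
    rw [hμ, Measure.prod_restrict]
    refine (ae_restrict_mem (measurableSet_Ici.prod measurableSet_Ici)).mono ?_
    rintro ⟨u, v⟩ ⟨hu, hv⟩
    simp only [mem_Ici] at hu hv
    simp only [Pi.zero_apply]
    rcases le_total u v with h | h
    · have := key u v hu h
      linarith
    · have := key v u hv h
      linarith
  rw [← hμ] at i1 i2 i3 i4
  rw [integral_sub (by exact i1.add i2) (by exact i3.add i4), integral_add i1 i2, integral_add i3 i4] at hn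
  have e := fun f g : ℝ → ℝ => integral_prod_mul (μ := μ) (ν := μ) f g
  rw [e (fun x => ψ x * t ^ x) (fun x => φ x * s ^ x),
    e (fun x => φ x * s ^ x) (fun x => ψ x * t ^ x),
    e (fun x => ψ x * s ^ x) (fun x => φ x * t ^ x),
    e (fun x => φ x * t ^ x) (fun x => ψ x * s ^ x)] at hn
  linarith
end

section
/- Let q > 1, let r > 0, and let (a_n)_{n∈ℕ}, (b_n)_{n∈ℕ} be real sequences with b_n > 0 for all n, such that n ↦ a_n/b_n is increasing. Suppose the series Ψ(s) = ∑_{n=0}^∞ (q−1) q^n a_n s^{q^n} and Φ(s) = ∑_{n=0}^∞ (q−1) q^n b_n s^{q^n} converge for every s ∈ (0,r). Then the function s ↦ Ψ(s)/Φ(s) is increasing on (0,r). -/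
lemma qs_finite (α β X Y : ℕ → ℝ)
    (h1 : ∀ i j, j ≤ i → α j * β i ≤ α i * β j)
    (h2 : ∀ i j, j ≤ i → X i * Y j ≤ Y i * X j) (N : ℕ) :
    (∑ i ∈ Finset.range N, α i * X i) * (∑ i ∈ Finset.range N, β i * Y i) ≤
    (∑ i ∈ Finset.range N, α i * Y i) * (∑ i ∈ Finset.range N, β i * X i) := by
  have key : ∀ i j, 0 ≤ (α i * β j - α j * β i) * (Y i * X j - X i * Y j) := by
    intro i j
    rcases le_total j i with h | h
    · exact mul_nonneg (sub_nonneg.2 (h1 i j h)) (sub_nonneg.2 (h2 i j h))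
    · apply mul_nonneg_of_nonpos_of_nonpos
      · linarith [h1 j i h]
      · linarith [h2 j i h]
  have hs : 0 ≤ ∑ i ∈ Finset.range N, ∑ j ∈ Finset.range N,
      (α i * β j - α j * β i) * (Y i * X j - X i * Y j) :=
    Finset.sum_nonneg fun i _ => Finset.sum_nonneg fun j _ => key i j
  have e : ∑ i ∈ Finset.range N, ∑ j ∈ Finset.range N,
      (α i * β j - α j * β i) * (Y i * X j - X i * Y j) =
      2 * ((∑ i ∈ Finset.range N, α i * Y i) * (∑ i ∈ Finset.range N, β i * X i)
      - (∑ i ∈ Finset.range N, α i * X i) * (∑ i ∈ Finset.range N, β i * Y i)) := by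
    have : ∀ i j, (α i * β j - α j * β i) * (Y i * X j - X i * Y j) =
      (α i * Y i) * (β j * X j) - (α i * X i) * (β j * Y j)
      - (β i * Y i) * (α j * X j) + (β i * X i) * (α j * Y j) := by intros; ring
    simp only [this, Finset.sum_add_distrib, Finset.sum_sub_distrib, ← Finset.sum_mul_sum]
    ring
  linarith


theorem quotient_q_series_monotone
    (q : ℝ) (hq : 1 < q) (r : ℝ) (hr : 0 < r)
    (a b : ℕ → ℝ) (hbpos : ∀ n, 0 < b n)
    (hratio : Monotone fun n => a n / b n)
    (hasum : ∀ s ∈ Set.Ioo (0 : ℝ) r,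
      Summable fun n : ℕ => (q - 1) * q ^ n * a n * s ^ (q ^ n))
    (hbsum : ∀ s ∈ Set.Ioo (0 : ℝ) r,
      Summable fun n : ℕ => (q - 1) * q ^ n * b n * s ^ (q ^ n)) :
    MonotoneOn
      (fun s => (∑' n : ℕ, (q - 1) * q ^ n * a n * s ^ (q ^ n)) /
        (∑' n : ℕ, (q - 1) * q ^ n * b n * s ^ (q ^ n)))
      (Set.Ioo (0 : ℝ) r) := by

  intro x hx y hy hxy
  have hq0 : 0 < q := by linarith
  have hc : ∀ n : ℕ, 0 < (q - 1) * q ^ n := fun n => mul_pos (by linarith) (pow_pos hq0 n)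
  have pos : ∀ s ∈ Set.Ioo (0 : ℝ) r, 0 < ∑' n : ℕ, (q - 1) * q ^ n * b n * s ^ (q ^ n) := by
    intro s hs
    have ht : ∀ n : ℕ, 0 < (q - 1) * q ^ n * b n * s ^ (q ^ n) := fun n =>
      mul_pos (mul_pos (hc n) (hbpos n)) (Real.rpow_pos_of_pos hs.1 _)
    exact (hbsum s hs).tsum_pos (fun n => (ht n).le) 0 (ht 0)
  show _ / _ ≤ _ / _
  rw [div_le_div_iff₀ (pos x hx) (pos y hy)]
  refine le_of_tendsto_of_tendsto'
    ((hasum x hx).hasSum.tendsto_sum_nat.mul (hbsum y hy).hasSum.tendsto_sum_nat)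
    ((hasum y hy).hasSum.tendsto_sum_nat.mul (hbsum x hx).hasSum.tendsto_sum_nat)
    (fun N => qs_finite (fun n => (q - 1) * q ^ n * a n) (fun n => (q - 1) * q ^ n * b n)
      (fun n => x ^ (q ^ n)) (fun n => y ^ (q ^ n)) ?_ ?_ N)
  · intro i j hij
    have h := hratio hij
    simp only at h
    rw [div_le_div_iff₀ (hbpos j) (hbpos i)] at h
    have := mul_le_mul_of_nonneg_left h (mul_pos (hc i) (hc j)).le
    linarith
  · intro i j hij
    have hp : q ^ j ≤ q ^ i := pow_le_pow_right₀ hq.le hij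
    have h := Real.rpow_le_rpow hx.1.le hxy (sub_nonneg.2 hp)
    have ex : x ^ (q ^ i) = x ^ (q ^ i - q ^ j) * x ^ (q ^ j) := by
      rw [← Real.rpow_add hx.1]; simp
    have ey : y ^ (q ^ i) = y ^ (q ^ i - q ^ j) * y ^ (q ^ j) := by
      rw [← Real.rpow_add hy.1]; simp
    have := mul_le_mul_of_nonneg_right h
      (mul_pos (Real.rpow_pos_of_pos hx.1 (q ^ j)) (Real.rpow_pos_of_pos hy.1 (q ^ j))).le
    rw [ex, ey]
    linarith
end

section
/- Let r > 0 and let (ψ_n)_{n∈ℕ}, (φ_n)_{n∈ℕ} be real sequences with φ_n > 0 for all n, such that n ↦ ψ_n/φ_n is increasing and ψ_0/φ_0 ≥ 1. Let T : (0,r) → (0,∞) be differentiable and decreasing. Suppose the power series Ψ(s) = ∑_{n=0}^∞ ψ_n s^n and Φ(s) = ∑_{n=0}^∞ φ_n s^n converge for every s ∈ (0,r). Then the function s ↦ (T(s) + Ψ(s)) / (T(s) + Φ(s)) is increasing on (0,r). -/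
theorem cheb_aux (ψ φ : ℕ → ℝ) (hc : ∀ n N, n ≤ N → ψ n * φ N ≤ ψ N * φ n)
    (x y : ℝ) (hx : 0 < x) (hxy : x ≤ y) (N : ℕ) :
    (∑ n ∈ Finset.range N, ψ n * x ^ n) * (∑ n ∈ Finset.range N, φ n * y ^ n) ≤
    (∑ n ∈ Finset.range N, ψ n * y ^ n) * (∑ n ∈ Finset.range N, φ n * x ^ n) := by
  induction N with
  | zero => simp
  | succ N ih =>
    simp only [Finset.sum_range_succ]
    have key : 0 ≤ ∑ n ∈ Finset.range N,
        (ψ N * φ n - ψ n * φ N) * (x ^ n * y ^ N - y ^ n * x ^ N) := by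
      apply Finset.sum_nonneg
      intro n hn
      have hn' : n ≤ N := (Finset.mem_range.mp hn).le
      apply mul_nonneg
      · linarith [hc n N hn']
      · obtain ⟨k, rfl⟩ := Nat.exists_eq_add_of_le hn'
        have h1 : x ^ k ≤ y ^ k := by gcongr
        have h2 : 0 ≤ x ^ n * y ^ n := by
          have : 0 < y := lt_of_lt_of_le hx hxy
          positivity
        rw [pow_add, pow_add]
        nlinarith [mul_le_mul_of_nonneg_left h1 h2]
    have e : ∑ n ∈ Finset.range N,
        (ψ N * φ n - ψ n * φ N) * (x ^ n * y ^ N - y ^ n * x ^ N) =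
        (∑ n ∈ Finset.range N, φ n * x ^ n) * (ψ N * y ^ N)
        - (∑ n ∈ Finset.range N, φ n * y ^ n) * (ψ N * x ^ N)
        - (∑ n ∈ Finset.range N, ψ n * x ^ n) * (φ N * y ^ N)
        + (∑ n ∈ Finset.range N, ψ n * y ^ n) * (φ N * x ^ N) := by
      simp only [Finset.sum_mul, ← Finset.sum_sub_distrib, ← Finset.sum_add_distrib]
      apply Finset.sum_congr rfl
      intro n _
      ring
    rw [e] at key
    nlinarith [key, ih]

theorem quotient_T_plus_power_series_monotone
    (r : ℝ) (hr : 0 < r) (ψ φ : ℕ → ℝ) (hφpos : ∀ n, 0 < φ n)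
    (hratio : Monotone fun n => ψ n / φ n)
    (hinit : 1 ≤ ψ 0 / φ 0)
    (T : ℝ → ℝ)
    (hTpos : ∀ s ∈ Set.Ioo (0 : ℝ) r, 0 < T s)
    (hTdiff : DifferentiableOn ℝ T (Set.Ioo (0 : ℝ) r))
    (hTdec : AntitoneOn T (Set.Ioo (0 : ℝ) r))
    (hψsum : ∀ s ∈ Set.Ioo (0 : ℝ) r, Summable fun n => ψ n * s ^ n)
    (hφsum : ∀ s ∈ Set.Ioo (0 : ℝ) r, Summable fun n => φ n * s ^ n) :
    MonotoneOn
      (fun s => (T s + ∑' n : ℕ, ψ n * s ^ n) / (T s + ∑' n : ℕ, φ n * s ^ n))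
      (Set.Ioo (0 : ℝ) r) := by
  intro x hx y hy hxy
  have hc : ∀ n N, n ≤ N → ψ n * φ N ≤ ψ N * φ n := by
    intro n N h
    have := hratio h
    exact (div_le_div_iff₀ (hφpos n) (hφpos N)).mp this
  have hge : ∀ n, φ n ≤ ψ n := by
    intro n
    have h : 1 ≤ ψ n / φ n := hinit.trans (hratio (Nat.zero_le n))
    exact (one_le_div (hφpos n)).mp h
  have hch : (∑' n : ℕ, ψ n * x ^ n) * (∑' n : ℕ, φ n * y ^ n) ≤
      (∑' n : ℕ, ψ n * y ^ n) * (∑' n : ℕ, φ n * x ^ n) :=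
    le_of_tendsto_of_tendsto'
      ((hψsum x hx).hasSum.tendsto_sum_nat.mul (hφsum y hy).hasSum.tendsto_sum_nat)
      ((hψsum y hy).hasSum.tendsto_sum_nat.mul (hφsum x hx).hasSum.tendsto_sum_nat)
      (fun N => cheb_aux ψ φ hc x y hx.1 hxy N)
  have hpos : ∀ s ∈ Set.Ioo (0 : ℝ) r, 0 ≤ ∑' n : ℕ, φ n * s ^ n := fun s hs =>
    tsum_nonneg fun n => mul_nonneg (hφpos n).le (pow_nonneg hs.1.le n)
  have hD0 : 0 ≤ (∑' n : ℕ, ψ n * x ^ n) - ∑' n : ℕ, φ n * x ^ n :=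
    sub_nonneg.mpr ((hφsum x hx).tsum_le_tsum
      (fun n => mul_le_mul_of_nonneg_right (hge n) (pow_nonneg hx.1.le n)) (hψsum x hx))
  have hD : (∑' n : ℕ, ψ n * x ^ n) - (∑' n : ℕ, φ n * x ^ n) ≤
      (∑' n : ℕ, ψ n * y ^ n) - ∑' n : ℕ, φ n * y ^ n := by
    rw [← (hψsum x hx).tsum_sub (hφsum x hx), ← (hψsum y hy).tsum_sub (hφsum y hy)]
    refine Summable.tsum_le_tsum (fun n => ?_) ((hψsum x hx).sub (hφsum x hx))
      ((hψsum y hy).sub (hφsum y hy))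
    have h1 : x ^ n ≤ y ^ n := pow_le_pow_left₀ hx.1.le hxy n
    nlinarith [mul_le_mul_of_nonneg_left h1 (sub_nonneg.mpr (hge n))]
  have hT := hTdec hx hy hxy
  have hTx := hTpos x hx
  have hTy := hTpos y hy
  have hm := mul_le_mul hT hD hD0 hTx.le
  have hpx := hpos x hx
  have hpy := hpos y hy
  show _ / _ ≤ _ / _
  rw [div_le_div_iff₀ (by linarith) (by linarith)]
  nlinarith [hm, hch]
end

section
/- Let r > 0, let m ≥ 1, and for each l ∈ {1,…,m} let (ψ_l(n))_{n∈ℕ} and (φ_l(n))_{n∈ℕ} be real sequences with φ_l(n) > 0 for all n, such that n ↦ ψ_l(n)/φ_l(n) is increasing and ψ_l(n) > 0 for all n. Suppose that for every s ∈ (0,r) and every l the power series ∑_{n=0}^∞ ψ_l(n) s^n and ∑_{n=0}^∞ φ_l(n) s^n converge. Then the function s ↦ (∏_{l=1}^m ∑_{n=0}^∞ ψ_l(n) s^n) / (∏_{l=1}^m ∑_{n=0}^∞ φ_l(n) s^n) is increasing on (0,r). -/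
theorem aux_pair (ψ φ : ℕ → ℝ) (hφ : ∀ n, 0 < φ n)
    (hratio : Monotone fun n => ψ n / φ n) (s t : ℝ) (hs : 0 < s) (hst : s ≤ t)
    (i j : ℕ) (hij : i ≤ j) :
    0 ≤ (ψ i * φ j - ψ j * φ i) * (t ^ i * s ^ j - s ^ i * t ^ j) := by
  have h1 : ψ i * φ j ≤ ψ j * φ i := (div_le_div_iff₀ (hφ i) (hφ j)).1 (hratio hij)
  have h2 : t ^ i * s ^ j ≤ s ^ i * t ^ j := by
    obtain ⟨k, rfl⟩ := Nat.exists_eq_add_of_le hij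
    have hk : s ^ k ≤ t ^ k := pow_le_pow_left₀ hs.le hst k
    have ht : 0 < t := hs.trans_le hst
    have : (s ^ i * t ^ i) * s ^ k ≤ (s ^ i * t ^ i) * t ^ k :=
      mul_le_mul_of_nonneg_left hk (by positivity)
    rw [pow_add, pow_add]
    linarith
  exact mul_nonneg_of_nonpos_of_nonpos (by linarith) (by linarith)

theorem aux_cross (ψ φ : ℕ → ℝ) (hψ : ∀ n, 0 < ψ n) (hφ : ∀ n, 0 < φ n)
    (hratio : Monotone fun n => ψ n / φ n) (s t : ℝ) (hs : 0 < s) (hst : s ≤ t)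
    (h1 : Summable fun n => ψ n * s ^ n) (h2 : Summable fun n => ψ n * t ^ n)
    (h3 : Summable fun n => φ n * s ^ n) (h4 : Summable fun n => φ n * t ^ n) :
    (∑' n, ψ n * s ^ n) * (∑' n, φ n * t ^ n) ≤ (∑' n, ψ n * t ^ n) * (∑' n, φ n * s ^ n) := by
  have ht : 0 < t := hs.trans_le hst
  have pos : ∀ (f : ℕ → ℝ) (x : ℝ), (∀ n, 0 < f n) → 0 < x → 0 ≤ fun n => f n * x ^ n :=
    fun f x hf hx n => mul_nonneg (hf n).le (pow_pos hx n).le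
  have A := h1.hasSum.mul h4.hasSum (h1.mul_of_nonneg h4 (pos _ _ hψ hs) (pos _ _ hφ ht))
  have B := h2.hasSum.mul h3.hasSum (h2.mul_of_nonneg h3 (pos _ _ hψ ht) (pos _ _ hφ hs))
  have G := B.sub A
  have G' := (Equiv.prodComm ℕ ℕ).hasSum_iff.2 G
  have H := (G.add G').nonneg (by
    rintro ⟨i, j⟩
    simp only [Function.comp, Equiv.prodComm_apply, Prod.swap, Pi.zero_apply]
    rcases le_total i j with hij | hij
    · linarith [aux_pair ψ φ hφ hratio s t hs hst i j hij]
    · linarith [aux_pair ψ φ hφ hratio s t hs hst j i hij])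
  linarith


theorem quotient_product_power_series_monotone
    (r : ℝ) (hr : 0 < r) (m : ℕ) (hm : 1 ≤ m)
    (ψ φ : Fin m → ℕ → ℝ)
    (hψpos : ∀ l n, 0 < ψ l n) (hφpos : ∀ l n, 0 < φ l n)
    (hratio : ∀ l, Monotone fun n => ψ l n / φ l n)
    (hψsum : ∀ s ∈ Set.Ioo (0 : ℝ) r, ∀ l, Summable fun n => ψ l n * s ^ n)
    (hφsum : ∀ s ∈ Set.Ioo (0 : ℝ) r, ∀ l, Summable fun n => φ l n * s ^ n) :
    MonotoneOn
      (fun s => (∏ l : Fin m, ∑' n : ℕ, ψ l n * s ^ n) /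
        (∏ l : Fin m, ∑' n : ℕ, φ l n * s ^ n))
      (Set.Ioo (0 : ℝ) r) := by

  intro s hs t ht hst
  have pos : ∀ (f : ℕ → ℝ) (x : ℝ), (∀ n, 0 < f n) → 0 < x →
      (Summable fun n => f n * x ^ n) → 0 < ∑' n, f n * x ^ n :=
    fun f x hf hx h => h.tsum_pos (fun n => mul_nonneg (hf n).le (pow_pos hx n).le) 0
      (mul_pos (hf 0) (pow_pos hx 0))
  simp only [← Finset.prod_div_distrib]
  apply Finset.prod_le_prod
  · intro l _
    exact (div_pos (pos _ _ (hψpos l) hs.1 (hψsum s hs l))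
      (pos _ _ (hφpos l) hs.1 (hφsum s hs l))).le
  · intro l _
    rw [div_le_div_iff₀ (pos _ _ (hφpos l) hs.1 (hφsum s hs l))
      (pos _ _ (hφpos l) ht.1 (hφsum t ht l))]
    exact aux_cross _ _ (hψpos l) (hφpos l) (hratio l) s t hs.1 hst (hψsum s hs l)
      (hψsum t ht l) (hφsum s hs l) (hφsum t ht l)
end

section
/- Let 0 < a < b, let m ≥ 1, and for each l ∈ {1,…,m} let ψ_l, φ_l : [0,∞) → (0,∞) be measurable functions such that υ ↦ ψ_l(υ)/φ_l(υ) is increasing on [0,∞). Suppose that for every s ∈ (a,b) and every l the functions υ ↦ ψ_l(υ)s^υ and υ ↦ φ_l(υ)s^υ are integrable on [0,∞). Then the function s ↦ (∏_{l=1}^m ∫_0^∞ ψ_l(υ) s^υ dυ) / (∏_{l=1}^m ∫_0^∞ φ_l(υ) s^υ dυ) is increasing on (a,b). -/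
open MeasureTheory Set

lemma aux_kernel {s t x y : ℝ} (hs : 0 < s) (hst : s ≤ t) (hxy : x ≤ y) :
    t ^ x * s ^ y ≤ s ^ x * t ^ y := by
  have ht : 0 < t := hs.trans_le hst
  have h := Real.rpow_le_rpow hs.le hst (sub_nonneg.2 hxy)
  have e1 : s ^ y = s ^ x * s ^ (y - x) := by
    rw [← Real.rpow_add hs]; congr 1; ring
  have e2 : t ^ y = t ^ x * t ^ (y - x) := by
    rw [← Real.rpow_add ht]; congr 1; ring
  rw [e1, e2]
  have h1 := Real.rpow_pos_of_pos hs x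
  have h2 := Real.rpow_pos_of_pos ht x
  calc t ^ x * (s ^ x * s ^ (y - x)) = (t ^ x * s ^ x) * s ^ (y - x) := by ring
    _ ≤ (t ^ x * s ^ x) * t ^ (y - x) := by gcongr
    _ = _ := by ring

lemma aux_cross_s12 (f g : ℝ → ℝ)
    (hg : ∀ x : ℝ, 0 ≤ x → 0 < g x)
    (hr : MonotoneOn (fun x => f x / g x) (Ici (0 : ℝ))) {s t : ℝ} (hs : 0 < s) (hst : s ≤ t)
    (hfs : IntegrableOn (fun x => f x * s ^ x) (Ici (0 : ℝ)) volume)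
    (hft : IntegrableOn (fun x => f x * t ^ x) (Ici (0 : ℝ)) volume)
    (hgs : IntegrableOn (fun x => g x * s ^ x) (Ici (0 : ℝ)) volume)
    (hgt : IntegrableOn (fun x => g x * t ^ x) (Ici (0 : ℝ)) volume) :
    (∫ x in Ici (0 : ℝ), f x * s ^ x) * (∫ x in Ici (0 : ℝ), g x * t ^ x) ≤
      (∫ x in Ici (0 : ℝ), f x * t ^ x) * (∫ x in Ici (0 : ℝ), g x * s ^ x) := by
  set μ := (volume : Measure ℝ).restrict (Ici (0 : ℝ)) with hμ
  have key : ∀ x y : ℝ, 0 ≤ x → 0 ≤ y → x ≤ y →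
      0 ≤ (f x * g y - f y * g x) * (t ^ x * s ^ y - s ^ x * t ^ y) := by
    intro x y hx hy hxy
    have h1 := hr hx hy hxy
    simp only at h1
    rw [div_le_div_iff₀ (hg x hx) (hg y hy)] at h1
    exact mul_nonneg_of_nonpos_of_nonpos (by linarith)
      (by linarith [aux_kernel hs hst hxy])
  have i1 := hft.mul_prod hgs
  have i2 := hfs.mul_prod hgt
  have i3 := hgt.mul_prod hfs
  have i4 := hgs.mul_prod hft
  rw [← hμ] at i1 i2 i3 i4
  have hnn : 0 ≤ ∫ z : ℝ × ℝ, (((f z.1 * t ^ z.1) * (g z.2 * s ^ z.2)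
      - (f z.1 * s ^ z.1) * (g z.2 * t ^ z.2))
      - ((g z.1 * t ^ z.1) * (f z.2 * s ^ z.2)
      - (g z.1 * s ^ z.1) * (f z.2 * t ^ z.2))) ∂(μ.prod μ) := by
    apply integral_nonneg_of_ae
    rw [hμ, Measure.prod_restrict]
    filter_upwards [ae_restrict_mem (measurableSet_Ici.prod measurableSet_Ici)] with z hz
    obtain ⟨hx, hy⟩ := hz
    simp only [mem_Ici] at hx hy
    show (0 : ℝ) ≤ _
    rcases le_total z.1 z.2 with h | h
    · have := key _ _ hx hy h
      nlinarith
    · have := key _ _ hy hx h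
      nlinarith
  rw [integral_sub (by exact i1.sub i2) (by exact i3.sub i4), integral_sub i1 i2, integral_sub i3 i4,
    integral_prod_mul (fun x => f x * t ^ x) (fun x => g x * s ^ x),
    integral_prod_mul (fun x => f x * s ^ x) (fun x => g x * t ^ x),
    integral_prod_mul (fun x => g x * t ^ x) (fun x => f x * s ^ x),
    integral_prod_mul (fun x => g x * s ^ x) (fun x => f x * t ^ x)] at hnn
  nlinarith

lemma aux_pos (f : ℝ → ℝ) (hf : ∀ x : ℝ, 0 ≤ x → 0 < f x) {s : ℝ} (hs : 0 < s)
    (hfs : IntegrableOn (fun x => f x * s ^ x) (Ici (0 : ℝ)) volume) :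
    0 < ∫ x in Ici (0 : ℝ), f x * s ^ x := by
  have hp : ∀ x ∈ Ici (0 : ℝ), 0 < f x * s ^ x := fun x hx =>
    mul_pos (hf x hx) (Real.rpow_pos_of_pos hs x)
  rw [setIntegral_pos_iff_support_of_nonneg_ae _ hfs]
  · have : Function.support (fun x => f x * s ^ x) ∩ Ici (0 : ℝ) = Ici 0 :=
      inter_eq_right.2 fun x hx => (hp x hx).ne'
    rw [this]; simp
  · filter_upwards [ae_restrict_mem measurableSet_Ici] with x hx
    exact (hp x hx).le

theorem quotient_product_integral_rpow_kernel_monotone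
    (a b : ℝ) (ha : 0 < a) (hab : a < b) (m : ℕ) (hm : 1 ≤ m)
    (ψ φ : Fin m → ℝ → ℝ)
    (hψm : ∀ l, Measurable (ψ l)) (hφm : ∀ l, Measurable (φ l))
    (hψpos : ∀ l, ∀ υ : ℝ, 0 ≤ υ → 0 < ψ l υ)
    (hφpos : ∀ l, ∀ υ : ℝ, 0 ≤ υ → 0 < φ l υ)
    (hratio : ∀ l, MonotoneOn (fun υ => ψ l υ / φ l υ) (Ici (0 : ℝ)))
    (hψint : ∀ s ∈ Ioo a b, ∀ l,
      IntegrableOn (fun υ => ψ l υ * s ^ υ) (Ici (0 : ℝ)) volume)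
    (hφint : ∀ s ∈ Ioo a b, ∀ l,
      IntegrableOn (fun υ => φ l υ * s ^ υ) (Ici (0 : ℝ)) volume) :
    MonotoneOn
      (fun s => (∏ l : Fin m, ∫ υ in Ici (0 : ℝ), ψ l υ * s ^ υ) /
        (∏ l : Fin m, ∫ υ in Ici (0 : ℝ), φ l υ * s ^ υ))
      (Ioo a b) := by
  intro s hs t ht hst
  have hs0 : 0 < s := ha.trans hs.1
  have ht0 : 0 < t := ha.trans ht.1
  simp only [← Finset.prod_div_distrib]
  apply Finset.prod_le_prod
  · intro l _
    exact (div_pos (aux_pos _ (hψpos l) hs0 (hψint s hs l))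
      (aux_pos _ (hφpos l) hs0 (hφint s hs l))).le
  · intro l _
    rw [div_le_div_iff₀ (aux_pos _ (hφpos l) hs0 (hφint s hs l))
      (aux_pos _ (hφpos l) ht0 (hφint t ht l))]
    exact aux_cross_s12 _ _ (hφpos l) (hratio l) hs0 hst (hψint s hs l) (hψint t ht l)
      (hφint s hs l) (hφint t ht l)
end

section
/- Let α < β be real numbers, let ψ, φ : [α,β] → ℝ be continuous with φ(υ) > 0 for all υ ∈ [α,β] and with υ ↦ ψ(υ)/φ(υ) increasing on [α,β]. Let w : ℝ × [α,β] → (0,∞) be continuous such that the partial derivative ∂w/∂s exists and is continuous on ℝ × [α,β], and such that for every s ∈ ℝ the function υ ↦ (∂w/∂s)(s,υ) / w(s,υ) is increasing on [α,β]. Then the function s ↦ (∫_α^β ψ(υ) w(s,υ) dυ) / (∫_α^β φ(υ) w(s,υ) dυ) is increasing on ℝ. -/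
open MeasureTheory Set intervalIntegral

theorem quotient_parameter_integral_monotone
    (α β : ℝ) (hαβ : α < β) (ψ φ : ℝ → ℝ) (w ws : ℝ → ℝ → ℝ)
    (hψc : ContinuousOn ψ (Icc α β))
    (hφc : ContinuousOn φ (Icc α β))
    (hφpos : ∀ υ ∈ Icc α β, 0 < φ υ)
    (hratio : MonotoneOn (fun υ => ψ υ / φ υ) (Icc α β))
    (hwpos : ∀ s : ℝ, ∀ υ ∈ Icc α β, 0 < w s υ)
    (hwc : ContinuousOn (fun p : ℝ × ℝ => w p.1 p.2) (univ ×ˢ Icc α β))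
    (hwderiv : ∀ s : ℝ, ∀ υ ∈ Icc α β, HasDerivAt (fun t => w t υ) (ws s υ) s)
    (hwsc : ContinuousOn (fun p : ℝ × ℝ => ws p.1 p.2) (univ ×ˢ Icc α β))
    (hlogmono : ∀ s : ℝ, MonotoneOn (fun υ => ws s υ / w s υ) (Icc α β)) :
    Monotone fun s =>
      (∫ υ in α..β, ψ υ * w s υ) / (∫ υ in α..β, φ υ * w s υ) := by
  intro s t hst
  have hmem : uIcc α β = Icc α β := uIcc_of_le hαβ.le
  have hwcs : ∀ s, ContinuousOn (w s) (Icc α β) := fun s =>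
    hwc.comp (f := fun υ : ℝ => (s, υ)) (by fun_prop) (fun υ hυ => ⟨mem_univ _, hυ⟩)
  have key : ∀ u ∈ Icc α β, ∀ v ∈ Icc α β, u ≤ v → w t u * w s v ≤ w s u * w t v := by
    intro u hu v hv huv
    have hm : Monotone (fun r => w r v / w r u) := by
      have hd : ∀ r, HasDerivAt (fun r => w r v / w r u)
          ((ws r v * w r u - w r v * ws r u) / (w r u) ^ 2) r := fun r =>
        (hwderiv r v hv).div (hwderiv r u hu) (hwpos r u hu).ne'
      refine monotone_of_deriv_nonneg (fun r => (hd r).differentiableAt) (fun r => ?_)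
      rw [(hd r).deriv]
      have h := hlogmono r hu hv huv
      simp only at h
      rw [div_le_div_iff₀ (hwpos r u hu) (hwpos r v hv)] at h
      apply div_nonneg _ (sq_nonneg _)
      linarith
    have h := hm hst
    simp only at h
    rw [div_le_div_iff₀ (hwpos s u hu) (hwpos t u hu)] at h
    linarith
  have key2 : ∀ u ∈ Icc α β, ∀ v ∈ Icc α β, u ≤ v → ψ u * φ v ≤ ψ v * φ u := by
    intro u hu v hv huv
    have h := hratio hu hv huv
    simp only at h
    rwa [div_le_div_iff₀ (hφpos u hu) (hφpos v hv)] at h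
  have pt : ∀ u ∈ Icc α β, ∀ v ∈ Icc α β,
      0 ≤ (ψ u * φ v - ψ v * φ u) * (w t u * w s v - w s u * w t v) := by
    intro u hu v hv
    rcases le_total u v with h | h
    · exact mul_nonneg_of_nonpos_of_nonpos (by linarith [key2 u hu v hv h])
        (by linarith [key u hu v hv h])
    · exact mul_nonneg (by linarith [key2 v hv u hu h]) (by linarith [key v hv u hu h])
  have hi : ∀ f : ℝ → ℝ, ContinuousOn f (Icc α β) → ∀ r,
      IntervalIntegrable (fun υ => f υ * w r υ) volume α β := fun f hf r =>
    ContinuousOn.intervalIntegrable (by rw [hmem]; exact hf.mul (hwcs r))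
  have hpos : ∀ r, 0 < ∫ υ in α..β, φ υ * w r υ := fun r =>
    intervalIntegral_pos_of_pos_on (hi φ hφc r)
      (fun x hx => mul_pos (hφpos x (Ioo_subset_Icc_self hx))
        (hwpos r x (Ioo_subset_Icc_self hx))) hαβ
  have lin : ∀ a b c d : ℝ,
      (∫ v in α..β, (a * (φ v * w s v) - b * (φ v * w t v)
        - (c * (ψ v * w s v) - d * (ψ v * w t v))))
      = a * (∫ v in α..β, φ v * w s v) - b * (∫ v in α..β, φ v * w t v)
        - (c * (∫ v in α..β, ψ v * w s v) - d * (∫ v in α..β, ψ v * w t v)) := by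
    intro a b c d
    have h1 := (hi φ hφc s).const_mul a
    have h2 := (hi φ hφc t).const_mul b
    have h3 := (hi ψ hψc s).const_mul c
    have h4 := (hi ψ hψc t).const_mul d
    rw [intervalIntegral.integral_sub (h1.sub h2) (h3.sub h4),
      intervalIntegral.integral_sub h1 h2, intervalIntegral.integral_sub h3 h4]
    simp only [intervalIntegral.integral_const_mul]
  have inner : ∀ u ∈ Icc α β, 0 ≤ (ψ u * w t u) * (∫ v in α..β, φ v * w s v)
      - (ψ u * w s u) * (∫ v in α..β, φ v * w t v)
      - ((φ u * w t u) * (∫ v in α..β, ψ v * w s v)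
        - (φ u * w s u) * (∫ v in α..β, ψ v * w t v)) := by
    intro u hu
    rw [← lin]
    refine intervalIntegral.integral_nonneg hαβ.le (fun v hv => ?_)
    have := pt u hu v hv
    linarith
  have hpos1 := hpos s
  have hpos2 := hpos t
  simp only
  rw [div_le_div_iff₀ hpos1 hpos2]
  generalize hA : (∫ v in α..β, ψ v * w t v) = A at *
  generalize hB : (∫ v in α..β, ψ v * w s v) = B at *
  generalize hC : (∫ v in α..β, φ v * w t v) = C at *
  generalize hD : (∫ v in α..β, φ v * w s v) = D at *
  have outer : 0 ≤ ∫ u in α..β, (A * (φ u * w s u) - B * (φ u * w t u)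
        - (C * (ψ u * w s u) - D * (ψ u * w t u))) := by
    refine intervalIntegral.integral_nonneg hαβ.le (fun u hu => ?_)
    have := inner u hu
    linarith
  rw [lin] at outer
  linarith
end

section
/- Let ψ, φ : ℕ → ℝ be sequences with φ(n) > 0 for all n and with n ↦ ψ(n)/φ(n) increasing on ℕ. Let w : ℝ × ℕ → (0,∞) be such that for each n the map s ↦ w(s,n) is differentiable on ℝ, and for every s ∈ ℝ the map n ↦ (∂w/∂s)(s,n) / w(s,n) is increasing on ℕ. Suppose that for every s ∈ ℝ the series Ψ(s) = ∑_{n=0}^∞ ψ(n) w(s,n) and Φ(s) = ∑_{n=0}^∞ φ(n) w(s,n) converge, that s ↦ Ψ(s) and s ↦ Φ(s) are differentiable with Ψ′(s) = ∑_{n=0}^∞ ψ(n) (∂w/∂s)(s,n) and Φ′(s) = ∑_{n=0}^∞ φ(n) (∂w/∂s)(s,n) (all four series converging absolutely). Then the function s ↦ Ψ(s)/Φ(s) is increasing on ℝ. -/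
theorem finite_chebyshev_aux (ψ φ u v : ℕ → ℝ)
    (hφ : ∀ n, 0 < φ n) (hu : ∀ n, 0 < u n)
    (h1 : Monotone fun n => ψ n / φ n) (h2 : Monotone fun n => v n / u n) (N : ℕ) :
    (∑ n ∈ Finset.range N, ψ n * u n) * (∑ n ∈ Finset.range N, φ n * v n) ≤
    (∑ n ∈ Finset.range N, ψ n * v n) * (∑ n ∈ Finset.range N, φ n * u n) := by
  have key : ∀ i j, 0 ≤ (ψ i * φ j - ψ j * φ i) * (v i * u j - v j * u i) := by
    have aux : ∀ i j, i ≤ j → 0 ≤ (ψ j * φ i - ψ i * φ j) * (v j * u i - v i * u j) := by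
      intro i j hij
      have a := h1 hij
      have b := h2 hij
      simp only at a b
      rw [div_le_div_iff₀ (hφ i) (hφ j)] at a
      rw [div_le_div_iff₀ (hu i) (hu j)] at b
      exact mul_nonneg (sub_nonneg.2 a) (sub_nonneg.2 b)
    intro i j
    rcases le_total i j with h | h
    · have := aux i j h
      linarith
    · exact aux j i h
  have hs : 0 ≤ ∑ i ∈ Finset.range N, ∑ j ∈ Finset.range N,
      (ψ i * φ j - ψ j * φ i) * (v i * u j - v j * u i) :=
    Finset.sum_nonneg fun i _ => Finset.sum_nonneg fun j _ => key i j
  have he : ∑ i ∈ Finset.range N, ∑ j ∈ Finset.range N,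
      (ψ i * φ j - ψ j * φ i) * (v i * u j - v j * u i) =
      ((∑ n ∈ Finset.range N, ψ n * v n) * (∑ n ∈ Finset.range N, φ n * u n)
      - (∑ n ∈ Finset.range N, ψ n * u n) * (∑ n ∈ Finset.range N, φ n * v n))
      + ((∑ n ∈ Finset.range N, φ n * u n) * (∑ n ∈ Finset.range N, ψ n * v n)
      - (∑ n ∈ Finset.range N, φ n * v n) * (∑ n ∈ Finset.range N, ψ n * u n)) := by
    simp only [Finset.sum_mul_sum, ← Finset.sum_sub_distrib, ← Finset.sum_add_distrib]
    refine Finset.sum_congr rfl fun i _ => Finset.sum_congr rfl fun j _ => ?_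
    ring
  rw [he] at hs
  linarith

theorem quotient_parameter_series_monotone
    (ψ φ : ℕ → ℝ) (w ws : ℝ → ℕ → ℝ)
    (hφpos : ∀ n, 0 < φ n)
    (hratio : Monotone fun n => ψ n / φ n)
    (hwpos : ∀ s n, 0 < w s n)
    (hwderiv : ∀ (s : ℝ) (n : ℕ), HasDerivAt (fun t => w t n) (ws s n) s)
    (hlogmono : ∀ s : ℝ, Monotone fun n => ws s n / w s n)
    (hψw : ∀ s : ℝ, Summable fun n => |ψ n * w s n|)
    (hφw : ∀ s : ℝ, Summable fun n => |φ n * w s n|)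
    (hψws : ∀ s : ℝ, Summable fun n => |ψ n * ws s n|)
    (hφws : ∀ s : ℝ, Summable fun n => |φ n * ws s n|)
    (hΨderiv : ∀ s : ℝ,
      HasDerivAt (fun t => ∑' n : ℕ, ψ n * w t n) (∑' n : ℕ, ψ n * ws s n) s)
    (hΦderiv : ∀ s : ℝ,
      HasDerivAt (fun t => ∑' n : ℕ, φ n * w t n) (∑' n : ℕ, φ n * ws s n) s) :
    Monotone fun s => (∑' n : ℕ, ψ n * w s n) / (∑' n : ℕ, φ n * w s n) := by
  have hpos : ∀ s, 0 < ∑' n : ℕ, φ n * w s n := fun s =>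
    (hφw s).of_abs.tsum_pos (fun n => (mul_pos (hφpos n) (hwpos s n)).le) 0
      (mul_pos (hφpos 0) (hwpos s 0))
  have hd := fun s => (hΨderiv s).fun_div (hΦderiv s) (hpos s).ne'
  refine monotone_of_deriv_nonneg (fun s => (hd s).differentiableAt) fun s => ?_
  rw [(hd s).deriv]
  refine div_nonneg (sub_nonneg.2 ?_) (sq_nonneg _)
  exact le_of_tendsto_of_tendsto'
    ((hψw s).of_abs.hasSum.tendsto_sum_nat.mul (hφws s).of_abs.hasSum.tendsto_sum_nat)
    ((hψws s).of_abs.hasSum.tendsto_sum_nat.mul (hφw s).of_abs.hasSum.tendsto_sum_nat)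
    (finite_chebyshev_aux ψ φ (w s) (ws s) hφpos (hwpos s) hratio (hlogmono s))
end

section
/- Let m ≥ 1 and for each l ∈ {1,…,m} let α_l < β_l be real numbers, let ψ_l, φ_l : [α_l,β_l] → (0,∞) be continuous with υ ↦ ψ_l(υ)/φ_l(υ) increasing on [α_l,β_l], and let w_l : ℝ × [α_l,β_l] → (0,∞) be continuous with continuous partial derivative ∂w_l/∂s on ℝ × [α_l,β_l], such that for every s ∈ ℝ the function υ ↦ (∂w_l/∂s)(s,υ) / w_l(s,υ) is increasing on [α_l,β_l]. Then the function s ↦ (∏_{l=1}^m ∫_{α_l}^{β_l} ψ_l(υ) w_l(s,υ) dυ) / (∏_{l=1}^m ∫_{α_l}^{β_l} φ_l(υ) w_l(s,υ) dυ) is increasing on ℝ. -/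
open MeasureTheory Set intervalIntegral

theorem cheb_aux_s15 (a b : ℝ) (hab : a ≤ b) (A B C D : ℝ → ℝ)
    (hA : ContinuousOn A (Icc a b)) (hB : ContinuousOn B (Icc a b))
    (hC : ContinuousOn C (Icc a b)) (hD : ContinuousOn D (Icc a b))
    (h : ∀ x ∈ Icc a b, ∀ y ∈ Icc a b,
      0 ≤ C x * D y + C y * D x - A x * B y - A y * B x) :
    (∫ x in a..b, A x) * (∫ x in a..b, B x) ≤ (∫ x in a..b, C x) * (∫ x in a..b, D x) := by
  have iA : IntervalIntegrable A volume a b := hA.intervalIntegrable_of_Icc hab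
  have iB : IntervalIntegrable B volume a b := hB.intervalIntegrable_of_Icc hab
  have iC : IntervalIntegrable C volume a b := hC.intervalIntegrable_of_Icc hab
  have iD : IntervalIntegrable D volume a b := hD.intervalIntegrable_of_Icc hab
  have h1 : ∀ x ∈ Icc a b, 0 ≤ C x * (∫ y in a..b, D y) + (∫ y in a..b, C y) * D x
      - A x * (∫ y in a..b, B y) - (∫ y in a..b, A y) * B x := by
    intro x hx
    have := intervalIntegral.integral_nonneg (μ := volume) hab (h x hx)
    rw [intervalIntegral.integral_sub
        (((iD.const_mul _).add (iC.mul_const _)).sub (iB.const_mul _)) (iA.mul_const _),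
      intervalIntegral.integral_sub ((iD.const_mul _).add (iC.mul_const _)) (iB.const_mul _),
      intervalIntegral.integral_add (iD.const_mul _) (iC.mul_const _),
      intervalIntegral.integral_const_mul, intervalIntegral.integral_const_mul,
      intervalIntegral.integral_mul_const, intervalIntegral.integral_mul_const] at this
    exact this
  have := intervalIntegral.integral_nonneg (μ := volume) hab h1
  rw [intervalIntegral.integral_sub
        (((iC.mul_const _).add (iD.const_mul _)).sub (iA.mul_const _)) (iB.const_mul _),
      intervalIntegral.integral_sub ((iC.mul_const _).add (iD.const_mul _)) (iA.mul_const _),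
      intervalIntegral.integral_add (iC.mul_const _) (iD.const_mul _),
      intervalIntegral.integral_const_mul, intervalIntegral.integral_const_mul,
      intervalIntegral.integral_mul_const, intervalIntegral.integral_mul_const] at this
  linarith

theorem ratio_aux (f g fd gd : ℝ → ℝ) (hf : ∀ s, HasDerivAt f (fd s) s)
    (hg : ∀ s, HasDerivAt g (gd s) s) (pf : ∀ s, 0 < f s) (pg : ∀ s, 0 < g s)
    (h : ∀ s, fd s / f s ≤ gd s / g s) {s t : ℝ} (hst : s ≤ t) :
    f t * g s ≤ f s * g t := by
  have hd : ∀ s, HasDerivAt (fun s => g s / f s) ((gd s * f s - g s * fd s) / f s ^ 2) s :=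
    fun s => (hg s).div (hf s) (pf s).ne'
  have hm : Monotone (fun s => g s / f s) := by
    apply monotone_of_deriv_nonneg (fun s => (hd s).differentiableAt)
    intro s
    rw [(hd s).deriv]
    have := h s
    rw [div_le_div_iff₀ (pf s) (pg s)] at this
    apply div_nonneg _ (sq_nonneg _)
    linarith
  have := hm hst
  simp only at this
  rw [div_le_div_iff₀ (pf s) (pf t)] at this
  linarith

theorem quotient_product_parameter_integral_monotone
    (m : ℕ) (hm : 1 ≤ m) (α β : Fin m → ℝ) (hαβ : ∀ l, α l < β l)
    (ψ φ : Fin m → ℝ → ℝ) (w ws : Fin m → ℝ → ℝ → ℝ)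
    (hψc : ∀ l, ContinuousOn (ψ l) (Icc (α l) (β l)))
    (hφc : ∀ l, ContinuousOn (φ l) (Icc (α l) (β l)))
    (hψpos : ∀ l, ∀ υ ∈ Icc (α l) (β l), 0 < ψ l υ)
    (hφpos : ∀ l, ∀ υ ∈ Icc (α l) (β l), 0 < φ l υ)
    (hratio : ∀ l, MonotoneOn (fun υ => ψ l υ / φ l υ) (Icc (α l) (β l)))
    (hwpos : ∀ l, ∀ s : ℝ, ∀ υ ∈ Icc (α l) (β l), 0 < w l s υ)
    (hwc : ∀ l, ContinuousOn (fun p : ℝ × ℝ => w l p.1 p.2) (univ ×ˢ Icc (α l) (β l)))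
    (hwderiv : ∀ l, ∀ s : ℝ, ∀ υ ∈ Icc (α l) (β l),
      HasDerivAt (fun t => w l t υ) (ws l s υ) s)
    (hwsc : ∀ l, ContinuousOn (fun p : ℝ × ℝ => ws l p.1 p.2) (univ ×ˢ Icc (α l) (β l)))
    (hlogmono : ∀ l, ∀ s : ℝ, MonotoneOn (fun υ => ws l s υ / w l s υ) (Icc (α l) (β l))) :
    Monotone fun s =>
      (∏ l : Fin m, ∫ υ in (α l)..(β l), ψ l υ * w l s υ) /
        (∏ l : Fin m, ∫ υ in (α l)..(β l), φ l υ * w l s υ) := by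
  have hsl : ∀ l s, ContinuousOn (w l s) (Icc (α l) (β l)) := fun l s =>
    (hwc l).comp (f := fun υ : ℝ => (s, υ)) (by fun_prop) (fun υ hυ => ⟨mem_univ _, hυ⟩)
  have hpos : ∀ (χ : Fin m → ℝ → ℝ), (∀ l, ContinuousOn (χ l) (Icc (α l) (β l))) →
      (∀ l, ∀ υ ∈ Icc (α l) (β l), 0 < χ l υ) → ∀ l s,
      0 < ∫ υ in (α l)..(β l), χ l υ * w l s υ := by
    intro χ hc hp l s
    apply intervalIntegral.intervalIntegral_pos_of_pos_on
      (((hc l).mul (hsl l s)).intervalIntegrable_of_Icc (hαβ l).le) _ (hαβ l)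
    intro υ hυ
    exact mul_pos (hp l υ (Ioo_subset_Icc_self hυ)) (hwpos l s υ (Ioo_subset_Icc_self hυ))
  intro s t hst
  simp only [← Finset.prod_div_distrib]
  apply Finset.prod_le_prod
  · intro l _
    exact (div_pos (hpos ψ hψc hψpos l s) (hpos φ hφc hφpos l s)).le
  intro l _
  rw [div_le_div_iff₀ (hpos φ hφc hφpos l s) (hpos φ hφc hφpos l t)]
  apply cheb_aux_s15 _ _ (hαβ l).le _ _ _ _ ((hψc l).mul (hsl l s)) ((hφc l).mul (hsl l t))
    ((hψc l).mul (hsl l t)) ((hφc l).mul (hsl l s))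
  have key : ∀ x ∈ Icc (α l) (β l), ∀ y ∈ Icc (α l) (β l), x ≤ y →
      0 ≤ (ψ l y * φ l x - ψ l x * φ l y) * (w l s x * w l t y - w l t x * w l s y) := by
    intro x hx y hy hxy
    apply mul_nonneg
    · have := hratio l hx hy hxy
      simp only at this
      rw [div_le_div_iff₀ (hφpos l x hx) (hφpos l y hy)] at this
      linarith
    · have := ratio_aux (fun s => w l s x) (fun s => w l s y) (fun s => ws l s x)
        (fun s => ws l s y) (fun s => hwderiv l s x hx) (fun s => hwderiv l s y hy)
        (fun s => hwpos l s x hx) (fun s => hwpos l s y hy)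
        (fun s => hlogmono l s hx hy hxy) hst
      linarith
  intro x hx y hy
  simp only [Pi.mul_apply]
  rcases le_total x y with hxy | hxy
  · have := key x hx y hy hxy
    nlinarith [this]
  · have := key y hy x hx hxy
    nlinarith [this]
end

section
/- Let m ≥ 1 and for each l ∈ {1,…,m} let ψ_l, φ_l : ℕ → (0,∞) be sequences with n ↦ ψ_l(n)/φ_l(n) increasing, and let w_l : ℝ × ℕ → (0,∞) be such that for each n the map s ↦ w_l(s,n) is differentiable on ℝ and for every s ∈ ℝ the map n ↦ (∂w_l/∂s)(s,n) / w_l(s,n) is increasing on ℕ. Suppose that for every s ∈ ℝ and every l the series ∑_{n=0}^∞ ψ_l(n) w_l(s,n) and ∑_{n=0}^∞ φ_l(n) w_l(s,n) converge, are differentiable in s, and their derivatives are given by termwise differentiation (with the differentiated series converging absolutely). Then the function s ↦ (∏_{l=1}^m ∑_{n=0}^∞ ψ_l(n) w_l(s,n)) / (∏_{l=1}^m ∑_{n=0}^∞ φ_l(n) w_l(s,n)) is increasing on ℝ. -/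
open Filter Topology in
lemma cheb_tsum (p q w v : ℕ → ℝ) (hq : ∀ n, 0 < q n)
    (hr : Monotone fun n => p n / q n) (hw : ∀ n, 0 < w n)
    (hl : Monotone fun n => v n / w n)
    (h1 : Summable fun n => p n * w n) (h2 : Summable fun n => q n * w n)
    (h3 : Summable fun n => p n * v n) (h4 : Summable fun n => q n * v n) :
    (∑' n, p n * w n) * (∑' n, q n * v n) ≤ (∑' n, p n * v n) * (∑' n, q n * w n) := by
  refine le_of_tendsto_of_tendsto' (h1.hasSum.tendsto_sum_nat.mul h4.hasSum.tendsto_sum_nat)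
    (h3.hasSum.tendsto_sum_nat.mul h2.hasSum.tendsto_sum_nat) fun N => ?_
  have key : ∀ i j, i ≤ j →
      0 ≤ (p i * q j - p j * q i) * (v i * w j - w i * v j) := by
    intro i j hij
    have a := hr hij
    have b := hl hij
    simp only at a b
    rw [div_le_div_iff₀ (hq i) (hq j)] at a
    rw [div_le_div_iff₀ (hw i) (hw j)] at b
    exact mul_nonneg_of_nonpos_of_nonpos (by linarith) (by linarith)
  have key2 : ∀ i j, 0 ≤ (p i * q j - p j * q i) * (v i * w j - w i * v j) := by
    intro i j
    rcases le_total i j with h | h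
    · exact key i j h
    · have := key j i h
      nlinarith
  have hs : 0 ≤ ∑ i ∈ Finset.range N, ∑ j ∈ Finset.range N,
      (p i * q j - p j * q i) * (v i * w j - w i * v j) :=
    Finset.sum_nonneg fun i _ => Finset.sum_nonneg fun j _ => key2 i j
  have e : ∑ i ∈ Finset.range N, ∑ j ∈ Finset.range N,
      (p i * q j - p j * q i) * (v i * w j - w i * v j) =
      ∑ i ∈ Finset.range N, ∑ j ∈ Finset.range N,
      ((p i * v i) * (q j * w j) - (p i * w i) * (q j * v j)
        + (q i * w i) * (p j * v j) - (q i * v i) * (p j * w j)) :=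
    Finset.sum_congr rfl fun i _ => Finset.sum_congr rfl fun j _ => by ring
  rw [e] at hs
  simp only [Finset.sum_add_distrib, Finset.sum_sub_distrib, ← Finset.sum_mul_sum] at hs
  linarith

theorem quotient_product_parameter_series_monotone
    (m : ℕ) (hm : 1 ≤ m)
    (ψ φ : Fin m → ℕ → ℝ) (w ws : Fin m → ℝ → ℕ → ℝ)
    (hψpos : ∀ l n, 0 < ψ l n) (hφpos : ∀ l n, 0 < φ l n)
    (hratio : ∀ l, Monotone fun n => ψ l n / φ l n)
    (hwpos : ∀ l (s : ℝ) (n : ℕ), 0 < w l s n)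
    (hwderiv : ∀ l (s : ℝ) (n : ℕ), HasDerivAt (fun t => w l t n) (ws l s n) s)
    (hlogmono : ∀ l (s : ℝ), Monotone fun n => ws l s n / w l s n)
    (hψw : ∀ l (s : ℝ), Summable fun n => |ψ l n * w l s n|)
    (hφw : ∀ l (s : ℝ), Summable fun n => |φ l n * w l s n|)
    (hψws : ∀ l (s : ℝ), Summable fun n => |ψ l n * ws l s n|)
    (hφws : ∀ l (s : ℝ), Summable fun n => |φ l n * ws l s n|)
    (hΨderiv : ∀ l (s : ℝ),
      HasDerivAt (fun t => ∑' n : ℕ, ψ l n * w l t n) (∑' n : ℕ, ψ l n * ws l s n) s)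
    (hΦderiv : ∀ l (s : ℝ),
      HasDerivAt (fun t => ∑' n : ℕ, φ l n * w l t n) (∑' n : ℕ, φ l n * ws l s n) s) :
    Monotone fun s =>
      (∏ l : Fin m, ∑' n : ℕ, ψ l n * w l s n) /
        (∏ l : Fin m, ∑' n : ℕ, φ l n * w l s n) := by
  have hP : ∀ l s, 0 < ∑' n, ψ l n * w l s n := fun l s =>
    (hψw l s).of_abs.tsum_pos (fun n => (mul_pos (hψpos l n) (hwpos l s n)).le) 0
      (mul_pos (hψpos l 0) (hwpos l s 0))
  have hQ : ∀ l s, 0 < ∑' n, φ l n * w l s n := fun l s =>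
    (hφw l s).of_abs.tsum_pos (fun n => (mul_pos (hφpos l n) (hwpos l s n)).le) 0
      (mul_pos (hφpos l 0) (hwpos l s 0))
  have hmono : ∀ l, Monotone fun s =>
      (∑' n, ψ l n * w l s n) / (∑' n, φ l n * w l s n) := by
    intro l
    have hd := fun s => (hΨderiv l s).fun_div (hΦderiv l s) (hQ l s).ne'
    refine monotone_of_deriv_nonneg (fun s => (hd s).differentiableAt) fun s => ?_
    rw [(hd s).deriv]
    have := cheb_tsum (ψ l) (φ l) (w l s) (ws l s) (hφpos l) (hratio l) (hwpos l s)
      (hlogmono l s) (hψw l s).of_abs (hφw l s).of_abs (hψws l s).of_abs (hφws l s).of_abs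
    exact div_nonneg (by linarith) (sq_nonneg _)
  intro s t hst
  simp only [← Finset.prod_div_distrib]
  exact Finset.prod_le_prod (fun l _ => (div_pos (hP l s) (hQ l s)).le) fun l _ => hmono l hst
end

section
/- Let (ψ_u)_{u∈ℕ} and (φ_u)_{u∈ℕ} be real sequences with φ_u > 0 for all u, such that u ↦ ψ_u/φ_u is increasing. For n ∈ ℕ define Ψ(n) = ∑_{u=0}^{n} ψ_u · n!/(n−u)! and Φ(n) = ∑_{u=0}^{n} φ_u · n!/(n−u)! (where n!/(n−u)! = n(n−1)⋯(n−u+1) is the descending factorial). Then the function n ↦ Ψ(n)/Φ(n) is increasing on ℕ. -/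
theorem descFact_cross (n u v : ℕ) (h : u ≤ v) :
    n.descFactorial v * (n + 1).descFactorial u ≤
      (n + 1).descFactorial v * n.descFactorial u := by
  have hu := Nat.succ_descFactorial n u
  have hv := Nat.succ_descFactorial n v
  refine le_of_mul_le_mul_left (a := n + 1) ?_ (Nat.succ_pos n)
  calc (n + 1) * (n.descFactorial v * (n + 1).descFactorial u)
      = (n + 1 - v) * ((n + 1).descFactorial v * (n + 1).descFactorial u) := by
        rw [← mul_assoc, ← hv, mul_assoc]
    _ ≤ (n + 1 - u) * ((n + 1).descFactorial v * (n + 1).descFactorial u) :=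
        Nat.mul_le_mul_right _ (by omega)
    _ = (n + 1) * ((n + 1).descFactorial v * n.descFactorial u) := by
        rw [mul_left_comm, hu]; ring

theorem quotient_generalized_monomial_series_monotone
    (ψ φ : ℕ → ℝ) (hφpos : ∀ u, 0 < φ u)
    (hratio : Monotone fun u => ψ u / φ u) :
    Monotone fun n : ℕ =>
      (∑ u ∈ Finset.range (n + 1), ψ u * (Nat.descFactorial n u : ℝ)) /
        (∑ u ∈ Finset.range (n + 1), φ u * (Nat.descFactorial n u : ℝ)) := by
  have hpos : ∀ n : ℕ, 0 < ∑ u ∈ Finset.range (n + 1), φ u * (Nat.descFactorial n u : ℝ) := by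
    intro n
    refine Finset.sum_pos' (fun u _ => mul_nonneg (hφpos u).le (Nat.cast_nonneg _))
      ⟨0, by simp, by simpa using hφpos 0⟩
  have hext : ∀ (f : ℕ → ℝ) (n : ℕ),
      ∑ u ∈ Finset.range (n + 1), f u * (Nat.descFactorial n u : ℝ) =
        ∑ u ∈ Finset.range (n + 1 + 1), f u * (Nat.descFactorial n u : ℝ) := by
    intro f n
    rw [Finset.sum_range_succ _ (n + 1), Nat.descFactorial_of_lt (Nat.lt_succ_self n)]
    simp
  refine monotone_nat_of_le_succ fun n => ?_
  rw [div_le_div_iff₀ (hpos n) (hpos (n + 1)), hext ψ n, hext φ n, ← sub_nonneg]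
  set s := Finset.range (n + 1 + 1)
  rw [Finset.sum_mul_sum, Finset.sum_mul_sum, ← Finset.sum_sub_distrib]
  simp_rw [← Finset.sum_sub_distrib]
  have key : ∀ u v, u ≤ v → 0 ≤ (ψ v * φ u - ψ u * φ v) *
      (((n + 1).descFactorial v : ℝ) * (n.descFactorial u : ℝ) -
        (n.descFactorial v : ℝ) * ((n + 1).descFactorial u : ℝ)) := by
    intro u v h
    refine mul_nonneg ?_ ?_
    · have := hratio h
      simp only at this
      rw [div_le_div_iff₀ (hφpos u) (hφpos v)] at this
      linarith
    · rw [sub_nonneg]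
      exact_mod_cast descFact_cross n u v h
  set F : ℕ → ℕ → ℝ := fun v u =>
    ψ v * ((n + 1).descFactorial v : ℝ) * (φ u * (n.descFactorial u : ℝ)) -
      ψ v * (n.descFactorial v : ℝ) * (φ u * ((n + 1).descFactorial u : ℝ)) with hF
  change 0 ≤ ∑ v ∈ s, ∑ u ∈ s, F v u
  have h2 : 0 ≤ ∑ v ∈ s, ∑ u ∈ s, (F v u + F u v) := by
    refine Finset.sum_nonneg fun v _ => Finset.sum_nonneg fun u _ => ?_
    rcases le_total u v with h | h
    · have := key u v h
      simp only [hF]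
      linarith
    · have := key v u h
      simp only [hF]
      linarith
  simp_rw [Finset.sum_add_distrib] at h2
  rw [Finset.sum_comm (f := fun v u => F u v)] at h2
  linarith
end

section
/- Let α < β be real numbers, let I ⊆ ℝ be a nontrivial interval, and let Ψ, Φ : I × [α,β] → (0,∞) be continuous functions whose partial derivatives ∂Ψ/∂s and ∂Φ/∂s exist and are continuous on I × [α,β]. Let T : I → (0,∞) be differentiable and decreasing. Suppose that for all (s,υ) ∈ I × [α,β]: Ψ(s,υ) ≥ Φ(s,υ) and (∂Ψ/∂s)(s,υ) ≥ (∂Φ/∂s)(s,υ), and that for every s ∈ I: (∫_α^β (∂Ψ/∂s)(s,υ) dυ)·(∫_α^β Φ(s,υ) dυ) − (∫_α^β Ψ(s,υ) dυ)·(∫_α^β (∂Φ/∂s)(s,υ) dυ) ≥ 0. Then the function s ↦ (T(s) + ∫_α^β Ψ(s,υ) dυ) / (T(s) + ∫_α^β Φ(s,υ) dυ) is increasing on I. -/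
open MeasureTheory Set intervalIntegral

theorem aux_slice {α β a b : ℝ} {F : ℝ → ℝ → ℝ}
    (hFc : ContinuousOn (fun p : ℝ × ℝ => F p.1 p.2) (Icc a b ×ˢ Icc α β)) {s : ℝ}
    (hs : s ∈ Icc a b) : ContinuousOn (F s) (Icc α β) :=
  hFc.comp (f := fun v : ℝ => (s, v)) (by fun_prop) (fun _ hv => ⟨hs, hv⟩)

theorem aux_meas {α β a b : ℝ} (hαβ : α < β) {F : ℝ → ℝ → ℝ}
    (hFc : ContinuousOn (fun p : ℝ × ℝ => F p.1 p.2) (Icc a b ×ˢ Icc α β)) {s : ℝ}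
    (hs : s ∈ Icc a b) : AEStronglyMeasurable (F s) (volume.restrict (uIoc α β)) := by
  rw [uIoc_of_le hαβ.le]
  exact ((aux_slice hFc hs).mono Ioc_subset_Icc_self).aestronglyMeasurable measurableSet_Ioc

theorem aux_int {α β a b : ℝ} (hαβ : α < β) {F : ℝ → ℝ → ℝ}
    (hFc : ContinuousOn (fun p : ℝ × ℝ => F p.1 p.2) (Icc a b ×ˢ Icc α β)) {s : ℝ}
    (hs : s ∈ Icc a b) : IntervalIntegrable (F s) volume α β := by
  apply ContinuousOn.intervalIntegrable
  rw [uIcc_of_le hαβ.le]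
  exact aux_slice hFc hs

theorem aux_bound {α β a b : ℝ} {F : ℝ → ℝ → ℝ}
    (hFc : ContinuousOn (fun p : ℝ × ℝ => F p.1 p.2) (Icc a b ×ˢ Icc α β)) :
    ∃ M : ℝ, ∀ s ∈ Icc a b, ∀ v ∈ Icc α β, ‖F s v‖ ≤ M := by
  obtain ⟨M, hM⟩ := (isCompact_Icc.prod isCompact_Icc).exists_bound_of_continuousOn hFc
  exact ⟨M, fun s hs v hv => hM (s, v) ⟨hs, hv⟩⟩

theorem aux_cont {α β a b : ℝ} (hαβ : α < β) {F : ℝ → ℝ → ℝ}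
    (hFc : ContinuousOn (fun p : ℝ × ℝ => F p.1 p.2) (Icc a b ×ˢ Icc α β)) :
    ContinuousOn (fun s => ∫ v in α..β, F s v) (Icc a b) := by
  obtain ⟨M, hM⟩ := aux_bound hFc
  intro s hs
  apply intervalIntegral.continuousWithinAt_of_dominated_interval (bound := fun _ => M)
  · filter_upwards [self_mem_nhdsWithin] with t ht using aux_meas hαβ hFc ht
  · filter_upwards [self_mem_nhdsWithin] with t ht
    refine ae_of_all _ fun v hv => ?_
    rw [uIoc_of_le hαβ.le] at hv
    exact hM t ht v (Ioc_subset_Icc_self hv)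
  · exact intervalIntegrable_const
  · refine ae_of_all _ fun v hv => ?_
    rw [uIoc_of_le hαβ.le] at hv
    exact (hFc.comp (f := fun t : ℝ => (t, v)) (by fun_prop)
      (fun _ ht => ⟨ht, Ioc_subset_Icc_self hv⟩)) s hs

theorem aux_deriv {α β a b : ℝ} (hαβ : α < β) {F Fs : ℝ → ℝ → ℝ}
    (hFc : ContinuousOn (fun p : ℝ × ℝ => F p.1 p.2) (Icc a b ×ˢ Icc α β))
    (hFsc : ContinuousOn (fun p : ℝ × ℝ => Fs p.1 p.2) (Icc a b ×ˢ Icc α β))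
    (hd : ∀ s ∈ Icc a b, ∀ v ∈ Icc α β, HasDerivWithinAt (fun t => F t v) (Fs s v) (Icc a b) s)
    {s : ℝ} (hs : s ∈ Ioo a b) :
    HasDerivAt (fun s => ∫ v in α..β, F s v) (∫ v in α..β, Fs s v) s := by
  obtain ⟨M, hM⟩ := aux_bound hFsc
  refine (intervalIntegral.hasDerivAt_integral_of_dominated_loc_of_deriv_le
    (bound := fun _ => M) (s := Ioo a b) (F' := Fs) (Ioo_mem_nhds hs.1 hs.2) ?_
    (aux_int hαβ hFc (Ioo_subset_Icc_self hs)) (aux_meas hαβ hFsc (Ioo_subset_Icc_self hs))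
    ?_ intervalIntegrable_const ?_).2
  · filter_upwards [Ioo_mem_nhds hs.1 hs.2] with t ht
    exact aux_meas hαβ hFc (Ioo_subset_Icc_self ht)
  · refine ae_of_all _ fun v hv t ht => ?_
    rw [uIoc_of_le hαβ.le] at hv
    exact hM t (Ioo_subset_Icc_self ht) v (Ioc_subset_Icc_self hv)
  · refine ae_of_all _ fun v hv t ht => ?_
    rw [uIoc_of_le hαβ.le] at hv
    exact (hd t (Ioo_subset_Icc_self ht) v (Ioc_subset_Icc_self hv)).hasDerivAt
      (Icc_mem_nhds ht.1 ht.2)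

theorem quotient_T_plus_parameter_integral_monotone
    (α β : ℝ) (hαβ : α < β) (I : Set ℝ) (hIconn : I.OrdConnected)
    (hInt : I.Nontrivial)
    (Ψ Φ Ψs Φs : ℝ → ℝ → ℝ) (T : ℝ → ℝ)
    (hΨpos : ∀ s ∈ I, ∀ υ ∈ Icc α β, 0 < Ψ s υ)
    (hΦpos : ∀ s ∈ I, ∀ υ ∈ Icc α β, 0 < Φ s υ)
    (hΨc : ContinuousOn (fun p : ℝ × ℝ => Ψ p.1 p.2) (I ×ˢ Icc α β))
    (hΦc : ContinuousOn (fun p : ℝ × ℝ => Φ p.1 p.2) (I ×ˢ Icc α β))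
    (hΨderiv : ∀ s ∈ I, ∀ υ ∈ Icc α β, HasDerivWithinAt (fun t => Ψ t υ) (Ψs s υ) I s)
    (hΦderiv : ∀ s ∈ I, ∀ υ ∈ Icc α β, HasDerivWithinAt (fun t => Φ t υ) (Φs s υ) I s)
    (hΨsc : ContinuousOn (fun p : ℝ × ℝ => Ψs p.1 p.2) (I ×ˢ Icc α β))
    (hΦsc : ContinuousOn (fun p : ℝ × ℝ => Φs p.1 p.2) (I ×ˢ Icc α β))
    (hTpos : ∀ s ∈ I, 0 < T s)
    (hTdiff : DifferentiableOn ℝ T I)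
    (hTdec : AntitoneOn T I)
    (hdom : ∀ s ∈ I, ∀ υ ∈ Icc α β, Φ s υ ≤ Ψ s υ)
    (hdomderiv : ∀ s ∈ I, ∀ υ ∈ Icc α β, Φs s υ ≤ Ψs s υ)
    (hkey : ∀ s ∈ I,
      0 ≤ (∫ υ in α..β, Ψs s υ) * (∫ υ in α..β, Φ s υ) -
        (∫ υ in α..β, Ψ s υ) * (∫ υ in α..β, Φs s υ)) :
    MonotoneOn
      (fun s => (T s + ∫ υ in α..β, Ψ s υ) / (T s + ∫ υ in α..β, Φ s υ)) I := by
  intro a ha b hb hab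
  have hsub : Icc a b ⊆ I := hIconn.out ha hb
  have hsub2 : Icc a b ×ˢ Icc α β ⊆ I ×ˢ Icc α β := prod_mono hsub subset_rfl
  have cΨ := hΨc.mono hsub2
  have cΦ := hΦc.mono hsub2
  have cΨs := hΨsc.mono hsub2
  have cΦs := hΦsc.mono hsub2
  have hBpos : ∀ s ∈ Icc a b, 0 < ∫ υ in α..β, Φ s υ := fun s hs =>
    intervalIntegral.intervalIntegral_pos_of_pos_on (aux_int hαβ cΦ hs)
      (fun v hv => hΦpos s (hsub hs) v (Ioo_subset_Icc_self hv)) hαβ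
  have hAB : ∀ s ∈ Icc a b, (∫ υ in α..β, Φ s υ) ≤ ∫ υ in α..β, Ψ s υ := fun s hs =>
    intervalIntegral.integral_mono_on hαβ.le (aux_int hαβ cΦ hs) (aux_int hαβ cΨ hs)
      (hdom s (hsub hs))
  have hAB' : ∀ s ∈ Icc a b, (∫ υ in α..β, Φs s υ) ≤ ∫ υ in α..β, Ψs s υ := fun s hs =>
    intervalIntegral.integral_mono_on hαβ.le (aux_int hαβ cΦs hs) (aux_int hαβ cΨs hs)
      (hdomderiv s (hsub hs))
  have hden : ∀ s ∈ Icc a b, 0 < T s + ∫ υ in α..β, Φ s υ := fun s hs =>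
    add_pos (hTpos s (hsub hs)) (hBpos s hs)
  have hTc : ContinuousOn T (Icc a b) := (hTdiff.mono hsub).continuousOn
  have key : MonotoneOn
      (fun s => (T s + ∫ υ in α..β, Ψ s υ) / (T s + ∫ υ in α..β, Φ s υ)) (Icc a b) := by
    refine monotoneOn_of_hasDerivWithinAt_nonneg (convex_Icc a b)
      (f' := fun s => ((deriv T s + ∫ υ in α..β, Ψs s υ) * (T s + ∫ υ in α..β, Φ s υ) -
        (T s + ∫ υ in α..β, Ψ s υ) * (deriv T s + ∫ υ in α..β, Φs s υ)) /
        (T s + ∫ υ in α..β, Φ s υ) ^ 2) ?_ ?_ ?_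
    · exact (hTc.add (aux_cont hαβ cΨ)).div (hTc.add (aux_cont hαβ cΦ))
        (fun s hs => (hden s hs).ne')
    · intro s hs
      rw [interior_Icc] at hs
      have hs' := Ioo_subset_Icc_self hs
      have hT : HasDerivAt T (deriv T s) s :=
        ((hTdiff s (hsub hs')).differentiableAt
          (Filter.mem_of_superset (Icc_mem_nhds hs.1 hs.2) hsub)).hasDerivAt
      have dA := aux_deriv hαβ cΨ cΨs
        (fun s hs v hv => (hΨderiv s (hsub hs) v hv).mono hsub) hs
      have dB := aux_deriv hαβ cΦ cΦs
        (fun s hs v hv => (hΦderiv s (hsub hs) v hv).mono hsub) hs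
      exact ((hT.add dA).div (hT.add dB) (hden s hs').ne').hasDerivWithinAt
    · intro s hs
      rw [interior_Icc] at hs
      have hs' := Ioo_subset_Icc_self hs
      have hT' : deriv T s ≤ 0 := by
        have h := (hTdec.mono hsub).derivWithin_nonpos (x := s)
        rwa [derivWithin_of_mem_nhds (Icc_mem_nhds hs.1 hs.2)] at h
      have h1 := hkey s (hsub hs')
      have h2 := mul_nonneg (neg_nonneg.2 hT') (sub_nonneg.2 (hAB s hs'))
      have h3 := mul_nonneg (hTpos s (hsub hs')).le (sub_nonneg.2 (hAB' s hs'))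
      refine div_nonneg ?_ (sq_nonneg _)
      nlinarith [h1, h2, h3]
  exact key (left_mem_Icc.2 hab) (right_mem_Icc.2 hab) hab
end
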